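/- arXiv:2408.17232 — 2 statements merged into one kernel-verified Lean document; each statement's English description precedes it below -/
import Mathlib

section
/- Let c be a real number with 0 < c < 2, and let q : ℕ → ℕ be any sequence with q(n)/n → c as n → ∞. Then the mean number of bridges over bubbles of size q(n) in linear chord diagrams with n chords satisfies b̄(n, q(n)) · (2n) / (q(n)·(2n − q(n))) → 1 as n → ∞; that is, b̄(n,q) is asymptotic to q(2n−q)/(2n) in the limit of large n and q. -/
namespace ChordBubbles

/-- A linear chord diagram with `n` chords: a fixed-point-free involution of `Fin (2*n)`. -/
def IsDiagram (n : ℕ) (f : Equiv.Perm (Fin (2 * n))) : Prop :=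
  (∀ i, f (f i) = i) ∧ ∀ i, f i ≠ i

/-- Vertex `i` is an endpoint of a short chord (a chord joining adjacent vertices). -/
def ShortEnd (n : ℕ) (f : Equiv.Perm (Fin (2 * n))) (i : Fin (2 * n)) : Prop :=
  (f i).val = i.val + 1 ∨ (f i).val + 1 = i.val

/-- `[a, b]` delimits a bubble: a maximal nonempty interval of vertices none of which is an
endpoint of a short chord. -/
def IsBubble (n : ℕ) (f : Equiv.Perm (Fin (2 * n))) (a b : ℕ) : Prop :=
  a ≤ b ∧ b < 2 * n ∧
  (∀ i : Fin (2 * n), a ≤ i.val → i.val ≤ b → ¬ ShortEnd n f i) ∧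
  (a = 0 ∨ ∃ j : Fin (2 * n), j.val + 1 = a ∧ ShortEnd n f j) ∧
  (b + 1 = 2 * n ∨ ∃ j : Fin (2 * n), j.val = b + 1 ∧ ShortEnd n f j)

/-- The size (number of vertices) of the bubble `[a, b]`. -/
def bubbleSize (a b : ℕ) : ℕ := b + 1 - a

/-- The number of bridges of the bubble `[a, b]` under the diagram `f`: the number of chords
joining a vertex inside the bubble to one outside it. -/
noncomputable def bridges (n : ℕ) (f : Equiv.Perm (Fin (2 * n))) (a b : ℕ) : ℕ :=
  Nat.card {i : Fin (2 * n) // (a ≤ i.val ∧ i.val ≤ b) ∧ ¬ (a ≤ (f i).val ∧ (f i).val ≤ b)}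

/-- `N n q b` : the number of pairs (diagram, bubble) where the diagram has `n` chords and the
bubble has size `q` and exactly `b` bridges. -/
noncomputable def N (n q b : ℕ) : ℕ :=
  Nat.card {p : Equiv.Perm (Fin (2 * n)) × ℕ × ℕ //
    IsDiagram n p.1 ∧ IsBubble n p.1 p.2.1 p.2.2 ∧
    bubbleSize p.2.1 p.2.2 = q ∧ bridges n p.1 p.2.1 p.2.2 = b}

/-- The mean number of bridges over all bubbles of size `q` in diagrams with `n` chords. -/
noncomputable def meanBridges (n q : ℕ) : ℝ :=
  (∑ b ∈ Finset.range (2 * n + 1), (b : ℝ) * N n q b) /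
  (∑ b ∈ Finset.range (2 * n + 1), (N n q b : ℝ))

open Finset in
lemma switch_apply {m : ℕ} (f : Equiv.Perm (Fin m)) (h1 : ∀ i, f (f i) = i) (h2 : ∀ i, f i ≠ i)
    (s t : Fin m) (hst : s ≠ t) (hs : f s ≠ t) (g : Equiv.Perm (Fin m))
    (hg : g = Equiv.swap s t * f * Equiv.swap s t) :
    (∀ i, g (g i) = i) ∧ (∀ i, g i ≠ i) ∧ g s = f t ∧ g (f t) = s ∧ g t = f s ∧ g (f s) = t ∧
    (∀ z, z ≠ s → z ≠ t → z ≠ f s → z ≠ f t → g z = f z) := by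
  have e : ∀ z, g z = Equiv.swap s t (f (Equiv.swap s t z)) := by
    intro z; subst hg; rfl
  have ht : f t ≠ s := by
    intro h; apply hs; rw [← h, h1]
  have hfs := h2 s
  have hft := h2 t
  refine ⟨?_, ?_, ?_, ?_, ?_, ?_, ?_⟩
  · intro i; simp [e, h1]
  · intro i hi
    rw [e] at hi
    have := congrArg (Equiv.swap s t) hi
    rw [Equiv.swap_apply_self] at this
    exact h2 _ this
  · rw [e, Equiv.swap_apply_left, Equiv.swap_apply_of_ne_of_ne ht hft]
  · rw [e, Equiv.swap_apply_of_ne_of_ne ht hft, h1, Equiv.swap_apply_right]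
  · rw [e, Equiv.swap_apply_right, Equiv.swap_apply_of_ne_of_ne hfs hs]
  · rw [e, Equiv.swap_apply_of_ne_of_ne hfs hs, h1, Equiv.swap_apply_left]
  · intro z a b c d
    rw [e, Equiv.swap_apply_of_ne_of_ne a b, Equiv.swap_apply_of_ne_of_ne]
    · intro h; apply c; rw [← h, h1]
    · intro h; apply d; rw [← h, h1]

/-- Inside the interval. -/
def Ins {m : ℕ} (a b : ℕ) (i : Fin m) : Prop := a ≤ i.val ∧ i.val ≤ b

/-- Boundary vertex. -/
def Bd {m : ℕ} (a b : ℕ) (i : Fin m) : Prop := i.val + 1 = a ∨ i.val = b + 1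

lemma bd_out {n : ℕ} {f : Equiv.Perm (Fin (2 * n))} {a b : ℕ} (hf : IsDiagram n f)
    (hb : IsBubble n f a b) (j : Fin (2 * n)) (hj : Bd a b j) :
    ¬ Ins a b j ∧ ¬ Ins a b (f j) := by
  obtain ⟨h1, h2, h3, h4, h5⟩ := hb
  refine ⟨by clear h3 h4 h5; unfold Bd at hj; unfold Ins; omega, ?_⟩
  intro hi
  have h := h3 (f j) hi.1 hi.2
  apply h
  unfold ShortEnd
  rw [hf.1]
  rcases hj with hj | hj
  · rcases h4 with h4 | ⟨k, hk, hs⟩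
    · omega
    · have : k = j := Fin.ext (Nat.add_right_cancel (hk.trans hj.symm))
      subst this
      unfold ShortEnd at hs
      clear h3
      omega
  · rcases h5 with h5 | ⟨k, hk, hs⟩
    · have := j.2; omega
    · have : k = j := Fin.ext (hk.trans hj.symm)
      subst this
      unfold ShortEnd at hs
      clear h3
      omega

/-- If `g` agrees with `f` at boundary vertices, and any inside vertex where they differ is not
short for `g`, the bubble is kept. -/
lemma bubble_of {n : ℕ} {f g : Equiv.Perm (Fin (2 * n))} {a b : ℕ}
    (hb : IsBubble n f a b) (h1 : ∀ j, Bd a b j → g j = f j)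
    (h2 : ∀ i, Ins a b i → g i = f i ∨ ¬ ShortEnd n g i) : IsBubble n g a b := by
  obtain ⟨k1, k2, k3, k4, k5⟩ := hb
  refine ⟨k1, k2, ?_, ?_, ?_⟩
  · intro i hi hi'
    rcases h2 i ⟨hi, hi'⟩ with h | h
    · have := k3 i hi hi'
      unfold ShortEnd at *
      rwa [h]
    · exact h
  · rcases k4 with h | ⟨j, hj, hs⟩
    · exact Or.inl h
    · refine Or.inr ⟨j, hj, ?_⟩
      unfold ShortEnd at *
      rwa [h1 j (Or.inl hj)]
  · rcases k5 with h | ⟨j, hj, hs⟩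
    · exact Or.inl h
    · refine Or.inr ⟨j, hj, ?_⟩
      unfold ShortEnd at *
      rwa [h1 j (Or.inr hj)]

lemma not_short_of_out {n : ℕ} {g : Equiv.Perm (Fin (2 * n))} {a b : ℕ} {i : Fin (2 * n)}
    (hi : Ins a b i) (ho : ¬ Ins a b (g i)) (hbd : ¬ Bd a b (g i)) : ¬ ShortEnd n g i := by
  unfold Ins Bd ShortEnd at *; omega

/-- Adjacent or equal. -/
def Near {m : ℕ} (x y : Fin m) : Prop := x = y ∨ x.val + 1 = y.val ∨ y.val + 1 = x.val

lemma forward {n : ℕ} {f : Equiv.Perm (Fin (2 * n))} {a b : ℕ} (hf : IsDiagram n f)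
    (hb : IsBubble n f a b) (x u : Fin (2 * n)) (hx : Ins a b x) (hfx : Ins a b (f x))
    (hu : ¬ Ins a b u) (hfu : ¬ Ins a b (f u)) (hbu : ¬ Bd a b u) (hbfu : ¬ Bd a b (f u))
    (g : Equiv.Perm (Fin (2 * n)))
    (hg : g = Equiv.swap (f x) u * f * Equiv.swap (f x) u) :
    IsDiagram n g ∧ IsBubble n g a b ∧ g x = u ∧ g (f x) = f u ∧ ¬ Near x (f x) := by
  have n1 : f x ≠ u := by rintro rfl; exact hu hfx
  have n2 : f (f x) ≠ u := by rw [hf.1]; rintro rfl; exact hu hx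
  obtain ⟨g1, g2, g3, g4, g5, g6, g7⟩ := switch_apply f hf.1 hf.2 (f x) u n1 n2 g hg
  rw [hf.1] at g5 g6 g7
  refine ⟨⟨g1, g2⟩, ?_, g6, g3, ?_⟩
  · apply bubble_of hb
    · intro j hj
      have hj' := bd_out hf hb j hj
      apply g7
      · rintro rfl; exact hj'.1 hfx
      · rintro rfl; exact hbu hj
      · rintro rfl; exact hj'.1 hx
      · rintro rfl; exact hbfu hj
    · intro i hi
      by_cases e1 : i = f x
      · right; subst e1
        exact not_short_of_out hi (by rwa [g3]) (by rwa [g3])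
      by_cases e2 : i = x
      · right; subst e2
        exact not_short_of_out hi (by rwa [g6]) (by rwa [g6])
      left
      apply g7 _ e1 _ e2
      · rintro rfl; exact hfu hi
      · rintro rfl; exact hu hi
  · have := hb.2.2.1 x hx.1 hx.2
    have h2 := hf.2 x
    unfold Near; unfold ShortEnd at this
    rintro (h | h | h)
    · exact h2 h.symm
    · omega
    · omega

lemma backward {n : ℕ} {g : Equiv.Perm (Fin (2 * n))} {a b : ℕ} (hf : IsDiagram n g)
    (hb : IsBubble n g a b) (x y : Fin (2 * n)) (hx : Ins a b x) (hy : Ins a b y)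
    (hgx : ¬ Ins a b (g x)) (hgy : ¬ Ins a b (g y)) (hxy : ¬ Near x y)
    (f : Equiv.Perm (Fin (2 * n)))
    (hg : f = Equiv.swap y (g x) * g * Equiv.swap y (g x)) :
    IsDiagram n f ∧ IsBubble n f a b ∧ f x = y ∧ f (g x) = g y ∧ ¬ Bd a b (g x) ∧
      ¬ Bd a b (g y) := by
  have n1 : y ≠ g x := by rintro rfl; exact hgx hy
  have n2 : g y ≠ g x := by
    intro h; exact hxy (Or.inl (g.injective h).symm)
  obtain ⟨g1, g2, g3, g4, g5, g6, g7⟩ := switch_apply g hf.1 hf.2 y (g x) n1 n2 f hg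
  rw [hf.1] at g3 g4 g7
  have bx : ¬ Bd a b (g x) := fun h => by
    have := (bd_out hf hb _ h).2
    rw [hf.1] at this; exact this hx
  have by' : ¬ Bd a b (g y) := fun h => by
    have := (bd_out hf hb _ h).2
    rw [hf.1] at this; exact this hy
  refine ⟨⟨g1, g2⟩, ?_, g4, g5, bx, by'⟩
  unfold Near at hxy
  apply bubble_of hb
  · intro j hj
    have hj' := bd_out hf hb j hj
    apply g7
    · rintro rfl; exact hj'.1 hy
    · rintro rfl; exact bx hj
    · rintro rfl; exact by' hj
    · rintro rfl; exact hj'.1 hx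
  · intro i hi
    by_cases e1 : i = x
    · right; subst e1; unfold ShortEnd; rw [g4]; omega
    by_cases e2 : i = y
    · right; subst e2; unfold ShortEnd; rw [g3]; omega
    left
    apply g7 _ e2 _ _ e1
    · rintro rfl; exact hgx hi
    · rintro rfl; exact hgy hi

open Classical in
/-- Pairs (diagram, bubble) with bubble size `q`. -/
noncomputable def PP (n q : ℕ) : Finset (Equiv.Perm (Fin (2 * n)) × ℕ × ℕ) :=
  (Finset.univ ×ˢ Finset.range (2 * n) ×ˢ Finset.range (2 * n)).filter
    (fun p => IsDiagram n p.1 ∧ IsBubble n p.1 p.2.1 p.2.2 ∧ bubbleSize p.2.1 p.2.2 = q)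

lemma mem_PP {n q : ℕ} (p : Equiv.Perm (Fin (2 * n)) × ℕ × ℕ) : p ∈ PP n q ↔
    IsDiagram n p.1 ∧ IsBubble n p.1 p.2.1 p.2.2 ∧ bubbleSize p.2.1 p.2.2 = q := by
  unfold PP
  simp only [Finset.mem_filter, Finset.mem_product, Finset.mem_univ, true_and, Finset.mem_range,
    and_iff_right_iff_imp]
  rintro ⟨-, h, -⟩
  have := h.1
  have := h.2.1
  omega

open Classical in
/-- inner chord, outer chord. -/
noncomputable def LL (n : ℕ) (p : Equiv.Perm (Fin (2 * n)) × ℕ × ℕ) :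
    Finset (Fin (2 * n) × Fin (2 * n)) :=
  (Finset.univ.filter fun x => Ins p.2.1 p.2.2 x ∧ Ins p.2.1 p.2.2 (p.1 x)) ×ˢ
  ((Finset.univ.filter fun u => ¬ Ins p.2.1 p.2.2 u ∧ ¬ Ins p.2.1 p.2.2 (p.1 u)).filter
    fun u => ¬ (Bd p.2.1 p.2.2 u ∨ Bd p.2.1 p.2.2 (p.1 u)))

open Classical in
/-- bridge vertices -/
noncomputable def Br (n : ℕ) (p : Equiv.Perm (Fin (2 * n)) × ℕ × ℕ) :
    Finset (Fin (2 * n)) :=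
  Finset.univ.filter fun x => Ins p.2.1 p.2.2 x ∧ ¬ Ins p.2.1 p.2.2 (p.1 x)

open Classical in
/-- pairs of bridges -/
noncomputable def RR (n : ℕ) (p : Equiv.Perm (Fin (2 * n)) × ℕ × ℕ) :
    Finset (Fin (2 * n) × Fin (2 * n)) :=
  (Br n p ×ˢ Br n p).filter fun z => ¬ Near z.1 z.2

lemma bridges_eq (n : ℕ) (p : Equiv.Perm (Fin (2 * n)) × ℕ × ℕ) :
    bridges n p.1 p.2.1 p.2.2 = (Br n p).card := by
  classical
  unfold bridges Br
  rw [Nat.card_eq_fintype_card, Fintype.card_subtype]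
  congr 1
  ext; simp [Ins]

lemma double_count (n q : ℕ) :
    ∑ p ∈ PP n q, (LL n p).card = ∑ p ∈ PP n q, (RR n p).card := by
  classical
  rw [← Finset.card_sigma, ← Finset.card_sigma]
  refine Finset.card_bij'
    (fun (z : Σ _ : Equiv.Perm (Fin (2 * n)) × ℕ × ℕ, Fin (2 * n) × Fin (2 * n)) _ =>
      (⟨(Equiv.swap (z.1.1 z.2.1) z.2.2 * z.1.1 * Equiv.swap (z.1.1 z.2.1) z.2.2, z.1.2),
        (z.2.1, z.1.1 z.2.1)⟩ :
        Σ _ : Equiv.Perm (Fin (2 * n)) × ℕ × ℕ, Fin (2 * n) × Fin (2 * n)))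
    (fun (z : Σ _ : Equiv.Perm (Fin (2 * n)) × ℕ × ℕ, Fin (2 * n) × Fin (2 * n)) _ =>
      (⟨(Equiv.swap z.2.2 (z.1.1 z.2.1) * z.1.1 * Equiv.swap z.2.2 (z.1.1 z.2.1), z.1.2),
        (z.2.1, z.1.1 z.2.1)⟩ :
        Σ _ : Equiv.Perm (Fin (2 * n)) × ℕ × ℕ, Fin (2 * n) × Fin (2 * n))) ?_ ?_ ?_ ?_
  · rintro ⟨⟨f, a, b⟩, x, u⟩ hz
    simp only [Finset.mem_sigma, mem_PP, LL, Finset.mem_product, Finset.mem_filter,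
      Finset.mem_univ, true_and, not_or] at hz
    obtain ⟨⟨hf, hb, hq⟩, ⟨hx, hfx⟩, ⟨hu, hfu⟩, hbu, hbfu⟩ := hz
    obtain ⟨k1, k2, k3, k4, k5⟩ := forward hf hb x u hx hfx hu hfu hbu hbfu _ rfl
    simp only [Finset.mem_sigma, mem_PP, RR, Br, Finset.mem_product, Finset.mem_filter,
      Finset.mem_univ, true_and]
    rw [k3, k4]
    exact ⟨⟨k1, k2, hq⟩, ⟨⟨hx, hu⟩, hfx, hfu⟩, k5⟩
  · rintro ⟨⟨g, a, b⟩, x, y⟩ hz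
    simp only [Finset.mem_sigma, mem_PP, RR, Br, Finset.mem_product, Finset.mem_filter,
      Finset.mem_univ, true_and] at hz
    obtain ⟨⟨hf, hb, hq⟩, ⟨⟨hx, hgx⟩, hy, hgy⟩, hn⟩ := hz
    obtain ⟨k1, k2, k3, k4, k5, k6⟩ := backward hf hb x y hx hy hgx hgy hn _ rfl
    simp only [Finset.mem_sigma, mem_PP, LL, Finset.mem_product, Finset.mem_filter,
      Finset.mem_univ, true_and, not_or]
    rw [k3, k4]
    exact ⟨⟨k1, k2, hq⟩, ⟨hx, hy⟩, ⟨hgx, hgy⟩, k5, k6⟩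
  · rintro ⟨⟨f, a, b⟩, x, u⟩ hz
    simp only [Finset.mem_sigma, mem_PP, LL, Finset.mem_product, Finset.mem_filter,
      Finset.mem_univ, true_and, not_or] at hz
    obtain ⟨⟨hf, hb, hq⟩, ⟨hx, hfx⟩, ⟨hu, hfu⟩, hbu, hbfu⟩ := hz
    obtain ⟨k1, k2, k3, k4, k5⟩ := forward hf hb x u hx hfx hu hfu hbu hbfu _ rfl
    simp only
    rw [k3]
    congr 2
    ext z
    simp
  · rintro ⟨⟨g, a, b⟩, x, y⟩ hz
    simp only [Finset.mem_sigma, mem_PP, RR, Br, Finset.mem_product, Finset.mem_filter,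
      Finset.mem_univ, true_and] at hz
    obtain ⟨⟨hf, hb, hq⟩, ⟨⟨hx, hgx⟩, hy, hgy⟩, hn⟩ := hz
    obtain ⟨k1, k2, k3, k4, k5, k6⟩ := backward hf hb x y hx hy hgx hgy hn _ rfl
    simp only
    rw [k3]
    congr 2
    ext z
    simp

lemma card_ins {m : ℕ} (a b : ℕ) (hab : a ≤ b) (hb : b < m) [DecidablePred (Ins (m := m) a b)] :
    (Finset.univ.filter fun x : Fin m => Ins a b x).card = b + 1 - a := by
  have : (Finset.univ.filter fun x : Fin m => Ins a b x)
      = Finset.Icc (⟨a, by omega⟩ : Fin m) ⟨b, hb⟩ := by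
    ext x
    rw [Finset.mem_filter, Finset.mem_Icc]
    simp only [Ins, Fin.le_def, Finset.mem_univ, true_and]
  rw [this, Fin.card_Icc]

lemma card_bd {m : ℕ} (s : Finset (Fin m)) (k l : ℕ)
    (h : ∀ x ∈ s, x.val + 1 = k ∨ x.val = l) : s.card ≤ 2 := by
  classical
  calc s.card = (s.image Fin.val).card := (Finset.card_image_of_injective _ Fin.val_injective).symm
    _ ≤ ({k - 1, l} : Finset ℕ).card := by
        apply Finset.card_le_card
        intro z hz
        obtain ⟨x, hx, rfl⟩ := Finset.mem_image.1 hz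
        have := h x hx
        simp; omega
    _ ≤ 2 := Finset.card_le_two

lemma LL_card {n q : ℕ} (p) (hp : p ∈ PP n q) :
    ∃ e : ℝ, 0 ≤ e ∧ e ≤ 4 ∧ ((LL n p).card : ℝ)
      = ((q : ℝ) - (Br n p).card) * (2 * n - q - (Br n p).card - e) ∧ (Br n p).card ≤ q := by
  classical
  obtain ⟨f, a, b⟩ := p
  obtain ⟨hf, hb, hq⟩ := (mem_PP _).1 hp
  simp only at hf hb hq
  have c1 := card_ins (m := 2 * n) a b hb.1 hb.2.1
  unfold bubbleSize at hq
  rw [hq] at c1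
  have c2 := Finset.card_filter_add_card_filter_not (s := Finset.univ.filter fun x : Fin (2 * n) => Ins a b x)
    (fun x => Ins a b (f x))
  rw [Finset.filter_filter, Finset.filter_filter, c1] at c2
  have c3 := Finset.card_filter_add_card_filter_not (s := (Finset.univ : Finset (Fin (2 * n))))
    (fun x => Ins a b x)
  rw [c1, Finset.card_univ, Fintype.card_fin] at c3
  have c4 := Finset.card_filter_add_card_filter_not (s := Finset.univ.filter fun x : Fin (2 * n) => ¬ Ins a b x)
    (fun x => Ins a b (f x))
  rw [Finset.filter_filter, Finset.filter_filter] at c4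
  have c5 : (Finset.univ.filter fun x : Fin (2 * n) => ¬ Ins a b x ∧ Ins a b (f x)).card
      = (Br n (f, a, b)).card := by
    refine Finset.card_bij' (fun x _ => f x) (fun x _ => f x) ?_ ?_ ?_ ?_
    · intro x hx
      simp only [Br, Finset.mem_filter, Finset.mem_univ, true_and, hf.1] at hx ⊢
      exact hx.symm
    · intro x hx
      simp only [Br, Finset.mem_filter, Finset.mem_univ, true_and, hf.1] at hx ⊢
      exact hx.symm
    · intro x _; exact hf.1 x
    · intro x _; exact hf.1 x
  have c6 := Finset.card_filter_add_card_filter_not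
    (s := Finset.univ.filter fun u : Fin (2 * n) => ¬ Ins a b u ∧ ¬ Ins a b (f u))
    (fun u => Bd a b u ∨ Bd a b (f u))
  set E := (Finset.univ.filter fun u : Fin (2 * n) => ¬ Ins a b u ∧ ¬ Ins a b (f u)).filter
    (fun u => Bd a b u ∨ Bd a b (f u)) with hE
  have c7 : E.card ≤ 4 := by
    rw [hE, Finset.filter_or]
    refine (Finset.card_union_le _ _).trans ?_
    have d1 : ∀ s : Finset (Fin (2 * n)), (s.filter fun u => Bd a b u).card ≤ 2 := by
      intro s
      apply card_bd _ a (b + 1)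
      intro x hx
      exact (Finset.mem_filter.1 hx).2
    have d2 : ∀ s : Finset (Fin (2 * n)), (s.filter fun u => Bd a b (f u)).card ≤ 2 := by
      intro s
      rw [← Finset.card_image_of_injective _ f.injective]
      apply card_bd _ a (b + 1)
      intro x hx
      obtain ⟨y, hy, rfl⟩ := Finset.mem_image.1 hx
      exact (Finset.mem_filter.1 hy).2
    exact add_le_add (d1 _) (d2 _)
  have c8 : (Finset.univ.filter fun x : Fin (2 * n) => Ins a b x ∧ ¬ Ins a b (f x)).card
      = (Br n (f, a, b)).card := by
    unfold Br; congr
  rw [c8] at c2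
  rw [c5] at c4
  refine ⟨E.card, by positivity, by exact_mod_cast c7, ?_, by omega⟩
  unfold LL
  rw [Finset.card_product]
  push_cast
  congr 1
  · rw [← c2]; push_cast
    rw [add_sub_cancel_right]
  · rw [← c4, ← c6] at c3
    have := congrArg (Nat.cast (R := ℝ)) c3
    push_cast at this
    linarith

lemma RR_card {n q : ℕ} (p : Equiv.Perm (Fin (2 * n)) × ℕ × ℕ) :
    ∃ e : ℝ, 0 ≤ e ∧ e ≤ 3 * (Br n p).card ∧ ((RR n p).card : ℝ)
      = (Br n p).card * (Br n p).card - e := by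
  classical
  have c := Finset.card_filter_add_card_filter_not (s := Br n p ×ˢ Br n p)
    (fun z => Near z.1 z.2)
  rw [Finset.card_product] at c
  refine ⟨(((Br n p ×ˢ Br n p).filter (fun z => Near z.1 z.2)).card : ℝ), by positivity, ?_, ?_⟩
  · have : ((Br n p ×ˢ Br n p).filter (fun z => Near z.1 z.2)).card ≤ 3 * (Br n p).card := by
      refine Finset.card_le_mul_card_image_of_maps_to (f := Prod.fst) ?_ _ ?_
      · intro z hz
        exact (Finset.mem_product.1 (Finset.mem_filter.1 hz).1).1
      · intro x hx
        calc _ ≤ ({x.val, x.val + 1, x.val - 1} : Finset ℕ).card := by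
              refine Finset.card_le_card_of_injOn (fun z => z.2.val) ?_ ?_
              · intro z hz
                simp only [Finset.coe_filter, Set.mem_ofPred_eq, Finset.mem_filter] at hz
                obtain ⟨⟨_, h⟩, rfl⟩ := hz
                unfold Near at h
                simp
                omega
              · intro z hz w hw h
                simp only [Finset.coe_filter, Set.mem_ofPred_eq, Finset.mem_filter] at hz hw
                exact Prod.ext (hz.2.trans hw.2.symm) (Fin.ext h)
          _ ≤ 3 := Finset.card_le_three
    exact_mod_cast this
  · unfold RR
    have := congrArg (Nat.cast (R := ℝ)) c
    push_cast at this
    linarith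

lemma main_bound (n q : ℕ) :
    |2 * (n : ℝ) * (∑ p ∈ PP n q, ((Br n p).card : ℝ)) - q * (2 * n - q) * (PP n q).card|
      ≤ 4 * q * (PP n q).card := by
  have h := double_count n q
  have h' : ∑ p ∈ PP n q, (((RR n p).card : ℝ) - (LL n p).card) = 0 := by
    rw [Finset.sum_sub_distrib]
    have := congrArg (Nat.cast (R := ℝ)) h
    push_cast at this
    linarith
  have e : 2 * (n : ℝ) * (∑ p ∈ PP n q, ((Br n p).card : ℝ)) - q * (2 * n - q) * (PP n q).card
      = ∑ p ∈ PP n q, (2 * (n : ℝ) * ((Br n p).card : ℝ) - q * (2 * n - q)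
        - (((RR n p).card : ℝ) - (LL n p).card)) := by
    rw [Finset.sum_sub_distrib, h', Finset.sum_sub_distrib, ← Finset.mul_sum]
    simp; ring
  rw [e]
  refine (Finset.abs_sum_le_sum_abs _ _).trans ?_
  have : ∀ p ∈ PP n q, |2 * (n : ℝ) * ((Br n p).card : ℝ) - q * (2 * n - q)
        - (((RR n p).card : ℝ) - (LL n p).card)| ≤ 4 * q := by
    intro p hp
    obtain ⟨e1, a1, a2, a3, a4⟩ := LL_card p hp
    obtain ⟨e2, b1, b2, b3⟩ := RR_card (q := q) p
    rw [a3, b3]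
    have a4' : ((Br n p).card : ℝ) ≤ q := by exact_mod_cast a4
    have a5 : (0 : ℝ) ≤ (Br n p).card := by positivity
    have m1 : 0 ≤ (q - ((Br n p).card : ℝ)) * e1 := mul_nonneg (by linarith) a1
    have m2 : (q - ((Br n p).card : ℝ)) * e1 ≤ (q - ((Br n p).card : ℝ)) * 4 :=
      mul_le_mul_of_nonneg_left a2 (by linarith)
    rw [abs_le]
    constructor <;> nlinarith
  refine (Finset.sum_le_card_nsmul _ _ _ this).trans ?_
  rw [nsmul_eq_mul, mul_comm]

lemma N_eq (n q b : ℕ) : N n q b = ((PP n q).filter fun p => (Br n p).card = b).card := by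
  classical
  unfold N
  rw [← Nat.card_eq_finsetCard]
  apply Nat.card_congr
  apply Equiv.subtypeEquivRight
  intro p
  rw [Finset.mem_filter, mem_PP, bridges_eq]
  tauto

lemma mean_eq (n q : ℕ) :
    meanBridges n q = (∑ p ∈ PP n q, ((Br n p).card : ℝ)) / (PP n q).card := by
  classical
  have hm : ∀ p ∈ PP n q, (Br n p).card ∈ Finset.range (2 * n + 1) := by
    intro p _
    rw [Finset.mem_range]
    have := Finset.card_le_univ (Br n p)
    rw [Fintype.card_fin] at this
    omega
  unfold meanBridges
  congr 1
  · rw [← Finset.sum_fiberwise_of_maps_to hm]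
    apply Finset.sum_congr rfl
    intro b _
    rw [N_eq, Finset.sum_congr rfl (g := fun _ => (b : ℝ))]
    · simp [mul_comm]
    · intro p hp
      rw [(Finset.mem_filter.1 hp).2]
  · rw [Finset.card_eq_sum_card_fiberwise hm]
    push_cast
    apply Finset.sum_congr rfl
    intro b _
    rw [N_eq]

/-- compress -/
def cmp (q i : ℕ) : ℕ := if i < q then i else i - 2

/-- expand -/
def xpd (q i : ℕ) : ℕ := if i < q then i else i + 2

/-- rotate -/
def rot (d i : ℕ) : ℕ := if i < d then i + d else i - d

/-- explicit matching -/
def mt (n q i : ℕ) : ℕ :=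
  if i = q then q + 1 else if i = q + 1 then q else xpd q (rot (n - 1) (cmp q i))

lemma mt_aux (n q i : ℕ) (h1 : i ≠ q) (h2 : i ≠ q + 1) :
    mt n q i = xpd q (rot (n - 1) (cmp q i)) := by
  simp [mt, h1, h2]

lemma mt_inv (n q i : ℕ) (hi : i < 2 * n) (hq2 : q + 2 ≤ 2 * n) : mt n q (mt n q i) = i := by
  by_cases h1 : i = q
  · subst h1; simp [mt]
  by_cases h2 : i = q + 1
  · subst h2; simp [mt]
  rw [mt_aux n q i h1 h2]
  have e1 : ∀ k, xpd q k ≠ q := by intro k; unfold xpd; split_ifs <;> omega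
  have e2 : ∀ k, xpd q k ≠ q + 1 := by intro k; unfold xpd; split_ifs <;> omega
  have e3 : ∀ k, cmp q (xpd q k) = k := by intro k; unfold cmp xpd; split_ifs <;> omega
  have e4 : xpd q (cmp q i) = i := by unfold cmp xpd; split_ifs <;> omega
  have e5 : cmp q i < 2 * (n - 1) := by unfold cmp; split_ifs <;> omega
  have e6 : ∀ k, k < 2 * (n - 1) → rot (n - 1) (rot (n - 1) k) = k := by
    intro k hk; unfold rot; split_ifs <;> omega
  rw [mt_aux _ _ _ (e1 _) (e2 _), e3, e6 _ e5, e4]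

lemma PP_pos (n q : ℕ) (hn : 3 ≤ n) (hq : 1 ≤ q) (hq2 : q + 2 ≤ 2 * n) : 0 < (PP n q).card := by
  have k0 : ∀ i, i < 2 * n → mt n q i < 2 * n := by
    intro i hi; unfold mt xpd rot cmp; split_ifs <;> omega
  have k1 : ∀ i, i < 2 * n → mt n q (mt n q i) = i := fun i hi => mt_inv n q i hi hq2
  have k2 : ∀ i, i < 2 * n → mt n q i ≠ i := by
    intro i hi; unfold mt xpd rot cmp; split_ifs <;> omega
  have k3 : ∀ i, i < q → mt n q i ≠ i + 1 ∧ mt n q i + 1 ≠ i := by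
    intro i hi; unfold mt xpd rot cmp; split_ifs <;> omega
  let F : Fin (2 * n) → Fin (2 * n) := fun i => ⟨mt n q i, k0 i i.2⟩
  have hF : Function.Involutive F := fun i => Fin.ext (k1 i i.2)
  rw [Finset.card_pos]
  refine ⟨(hF.toPerm F, 0, q - 1), (mem_PP _).2 ⟨⟨hF, ?_⟩, ⟨?_, ?_, ?_, ?_, ?_⟩, ?_⟩⟩
  · intro i h
    exact k2 i i.2 (congrArg Fin.val h)
  · simp
  · simp only; omega
  · intro i _ hi h
    have := k3 i (by simp only at hi; omega)
    have e : (hF.toPerm F i).val = mt n q i := rfl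
    unfold ShortEnd at h
    simp only [e] at h
    omega
  · left; rfl
  · right
    refine ⟨⟨q, by omega⟩, by simp only; omega, Or.inl ?_⟩
    change mt n q q = q + 1
    simp [mt]
  · unfold bubbleSize; simp only; omega

/-- The mean number of bridges of bubbles of size `q n` in diagrams with `n` chords is
asymptotic to `q(2n-q)/(2n)` whenever `q n / n → c` with `0 < c < 2`. -/
theorem mean_bridges_asymptotic (c : ℝ) (hc0 : 0 < c) (hc2 : c < 2) (q : ℕ → ℕ)
    (hq : Filter.Tendsto (fun n => (q n : ℝ) / n) Filter.atTop (nhds c)) :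
    Filter.Tendsto
      (fun n => meanBridges n (q n) * (2 * (n : ℝ)) / ((q n : ℝ) * (2 * (n : ℝ) - (q n : ℝ))))
      Filter.atTop (nhds 1) := by
  have hlow : ∀ᶠ n in Filter.atTop, c / 2 < (q n : ℝ) / n :=
    hq.eventually (lt_mem_nhds (by linarith))
  have hup : ∀ᶠ n in Filter.atTop, (q n : ℝ) / n < (c + 2) / 2 :=
    hq.eventually (gt_mem_nhds (by linarith))
  have hbig : ∀ᶠ n : ℕ in Filter.atTop, 2 ≤ ((2 - c) / 2) * (n : ℝ) :=
    (tendsto_natCast_atTop_atTop.const_mul_atTop (by linarith)).eventually_ge_atTop 2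
  rw [tendsto_iff_dist_tendsto_zero]
  have hz : Filter.Tendsto (fun n : ℕ => (8 / (2 - c)) / (n : ℝ)) Filter.atTop (nhds 0) :=
    tendsto_const_div_atTop_nhds_zero_nat _
  refine squeeze_zero' (Filter.Eventually.of_forall fun _ => dist_nonneg) ?_ hz
  filter_upwards [hlow, hup, hbig, Filter.eventually_ge_atTop 3] with n h1 h2 h3 h4
  have hn : (0 : ℝ) < n := by
    have : (3 : ℝ) ≤ n := by exact_mod_cast h4
    linarith
  rw [lt_div_iff₀ hn] at h1
  rw [div_lt_iff₀ hn] at h2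
  have q0 : (0 : ℝ) < q n := lt_trans (by positivity) h1
  have q1 : 1 ≤ q n := by exact_mod_cast q0
  have hp : (2 - c) / 2 * n ≤ 2 * n - q n := by linarith
  have q2 : q n + 2 ≤ 2 * n := by
    have : (q n : ℝ) + 2 ≤ 2 * n := by linarith
    exact_mod_cast this
  have hT : (0 : ℝ) < (PP n (q n)).card := by exact_mod_cast PP_pos n (q n) h4 q1 q2
  have hb := main_bound n (q n)
  have p0 : (0 : ℝ) < 2 * n - q n := by linarith
  rw [mean_eq, Real.dist_eq]
  set S := ∑ p ∈ PP n (q n), ((Br n p).card : ℝ)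
  set T : ℝ := ((PP n (q n)).card : ℝ)
  have e : S / T * (2 * (n : ℝ)) / ((q n : ℝ) * (2 * (n : ℝ) - (q n : ℝ))) - 1
      = (2 * n * S - q n * (2 * n - q n) * T) / (T * (q n * (2 * n - q n))) := by
    field_simp
  rw [e, abs_div, abs_of_pos (a := T * (q n * (2 * n - q n))) (by positivity)]
  have c2 : 0 < 2 - c := by linarith
  calc _ ≤ 4 * q n * T / (T * (q n * (2 * n - q n))) := by gcongr
    _ = 4 / (2 * n - q n) := by field_simp
    _ ≤ 4 / ((2 - c) / 2 * n) := by gcongr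
    _ = _ := by field_simp; norm_num

end ChordBubbles
end

section
/- The number of bridges of a bubble is asymptotically normal: let c be a real number with 0 < c < 2, let q : ℕ → ℕ be any sequence with q(n)/n → c, set b̄(n) = q(n)(2n−q(n))/(2n) and σ(n) = q(n)(2n−q(n))/(2n^{3/2}). Then for every real t, the proportion (Σ_{b ≤ b̄(n) + t·σ(n)} N_{q(n),b}(n)) / (Σ_b N_{q(n),b}(n)) converges, as n → ∞, to Φ(t) = (1/√(2π)) ∫_{−∞}^{t} e^{−x²/2} dx, the standard normal cumulative distribution function. -/
namespace ChordBubbles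

section helpers
open Filter MeasureTheory Topology
open scoped Nat

theorem levy_aux (K : ℕ → ℕ) (p x : ℕ → ℕ → ℝ) (hp : ∀ n b, 0 ≤ p n b)
    (h1 : ∀ n, ∑ b ∈ Finset.range (K n), p n b = 1)
    (hc : ∀ θ : ℝ, Tendsto (fun n => ∑ b ∈ Finset.range (K n),
      (p n b : ℂ) * Complex.exp ((θ * x n b : ℝ) * Complex.I)) atTop
      (𝓝 (Complex.exp (-(θ : ℂ) ^ 2 / 2)))) (t : ℝ) :
    Tendsto (fun n => ∑ b ∈ Finset.range (K n), if x n b ≤ t then p n b else 0) atTop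
      (𝓝 ((Real.sqrt (2 * Real.pi))⁻¹ * ∫ x in Set.Iic t, Real.exp (-x ^ 2 / 2))) := by
  classical
  let M : ℕ → Measure ℝ := fun n =>
    ∑ b ∈ Finset.range (K n), ENNReal.ofReal (p n b) • Measure.dirac (x n b)
  have hset : ∀ n (s : Set ℝ), MeasurableSet s → M n s =
      ENNReal.ofReal (∑ b ∈ Finset.range (K n), if x n b ∈ s then p n b else 0) := by
    intro n s hs
    rw [ENNReal.ofReal_sum_of_nonneg (fun b _ => by split_ifs <;> simp [hp])]
    simp only [M, Measure.finsetSum_apply, Measure.smul_apply, Measure.dirac_apply' _ hs,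
      smul_eq_mul]
    refine Finset.sum_congr rfl fun b _ => ?_
    by_cases h : x n b ∈ s <;> simp [h]
  have hprob : ∀ n, IsProbabilityMeasure (M n) := fun n => ⟨by
    rw [hset n _ MeasurableSet.univ]; simp [h1]⟩
  let P : ℕ → ProbabilityMeasure ℝ := fun n => ⟨M n, hprob n⟩
  let G : ProbabilityMeasure ℝ := ⟨ProbabilityTheory.gaussianReal 0 1, inferInstance⟩
  have hlim : Tendsto P atTop (𝓝 G) := by
    refine ProbabilityMeasure.tendsto_of_tendsto_charFun fun θ => ?_
    have e1 : charFun (G : Measure ℝ) θ = Complex.exp (-(θ : ℂ) ^ 2 / 2) := by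
      show charFun (ProbabilityTheory.gaussianReal 0 1) θ = _
      rw [ProbabilityTheory.charFun_gaussianReal]
      congr 1; push_cast; ring
    rw [e1]
    refine (hc θ).congr fun n => ?_
    show _ = charFun (M n) θ
    rw [charFun_apply]
    simp only [M]
    rw [integral_finsetSum_measure]
    · refine Finset.sum_congr rfl fun b _ => ?_
      rw [integral_smul_measure, integral_dirac, ENNReal.toReal_ofReal (hp n b)]
      simp
    · intro b _
      refine Integrable.smul_measure ?_ (by simp)
      exact integrable_dirac (by simp [enorm_lt_top])
  have hfr : G (frontier (Set.Iic t)) = 0 := by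
    have : (ProbabilityTheory.gaussianReal 0 1) (frontier (Set.Iic t)) = 0 := by
      have := ProbabilityTheory.gaussianReal_absolutelyContinuous 0 (v := 1) (by simp)
      apply this
      simp
    exact (ProbabilityMeasure.null_iff_toMeasure_null _ _).2 this
  have h2 := ProbabilityMeasure.tendsto_measure_of_null_frontier_of_tendsto hlim hfr
  have h3 := (NNReal.continuous_coe.tendsto _).comp h2
  have e2 : ((G (Set.Iic t) : NNReal) : ℝ) =
      (Real.sqrt (2 * Real.pi))⁻¹ * ∫ x in Set.Iic t, Real.exp (-x ^ 2 / 2) := by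
    have : ((G (Set.Iic t) : NNReal) : ℝ) =
      ((ProbabilityTheory.gaussianReal 0 1) (Set.Iic t)).toReal := rfl
    rw [this, ProbabilityTheory.gaussianReal_apply_eq_integral _ (by simp),
      ENNReal.toReal_ofReal]
    · rw [← integral_const_mul]
      simp [ProbabilityTheory.gaussianPDFReal]
    · exact integral_nonneg fun _ => ProbabilityTheory.gaussianPDFReal_nonneg _ _ _
  rw [e2] at h3
  refine h3.congr fun n => ?_
  show (M n (Set.Iic t)).toReal = _
  rw [hset n _ measurableSet_Iic, ENNReal.toReal_ofReal]
  · simp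
  · exact Finset.sum_nonneg fun b _ => by split_ifs <;> simp [hp]

theorem levy_aux2 (K : ℕ → ℕ) (p x : ℕ → ℕ → ℝ) (δ : ℕ → ℝ) (hδ : Tendsto δ atTop (𝓝 0))
    (hp : ∀ n b, 0 ≤ p n b)
    (h1 : ∀ᶠ n in atTop, ∑ b ∈ Finset.range (K n), p n b = 1)
    (hc : ∀ θ : ℝ, Tendsto (fun n => ∑ b ∈ Finset.range (K n),
      (p n b : ℂ) * Complex.exp ((θ * x n b : ℝ) * Complex.I)) atTop
      (𝓝 (Complex.exp (-(θ : ℂ) ^ 2 / 2)))) (t : ℝ) :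
    Tendsto (fun n => ∑ b ∈ Finset.range (K n), if x n b ≤ t + δ n then p n b else 0) atTop
      (𝓝 ((Real.sqrt (2 * Real.pi))⁻¹ * ∫ x in Set.Iic t, Real.exp (-x ^ 2 / 2))) := by
  obtain ⟨n0, hn0⟩ := eventually_atTop.1 h1
  rw [← tendsto_add_atTop_iff_nat n0]
  have := levy_aux (fun n => K (n + n0)) (fun n => p (n + n0))
    (fun n b => x (n + n0) b - δ (n + n0)) (fun n => hp _) (fun n => hn0 _ (by omega)) ?_ t
  · simpa only [sub_le_iff_le_add] using this
  · intro θ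
    have a := (tendsto_add_atTop_iff_nat n0).2 (hc θ)
    have d := (tendsto_add_atTop_iff_nat n0).2 hδ
    have e : Tendsto (fun n => Complex.exp ((-θ * δ (n + n0) : ℝ) * Complex.I)) atTop (𝓝 1) := by
      have : Continuous (fun y : ℝ => Complex.exp ((-θ * y : ℝ) * Complex.I)) := by fun_prop
      simpa [Function.comp_def] using (this.tendsto 0).comp d
    have f := a.mul e
    rw [mul_one] at f
    refine f.congr fun n => ?_
    rw [Finset.sum_mul]
    refine Finset.sum_congr rfl fun b _ => ?_
    rw [mul_assoc, ← Complex.exp_add]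
    congr 2; push_cast; ring

theorem stein {E : Type*} [AddCommGroup E] [Module ℝ E] (p : ℕ → ℝ) (q m : ℝ) (K : ℕ)
    (hK : ∀ b, K ≤ b → p b = 0)
    (hrel : ∀ b : ℕ, p (b + 2) * ((b + 1) * (b + 2)) = p b * ((q - b) * (m - b))) (g : ℕ → E) :
    ∑ b ∈ Finset.range K, (p b * (b * (b - 1))) • g (b - 2) =
      ∑ b ∈ Finset.range K, (p b * ((q - b) * (m - b))) • g b := by
  have h : ∑ b ∈ Finset.range K, (p b * (b * (b - 1))) • g (b - 2) =
      ∑ b ∈ Finset.range (K + 2), (p b * (b * (b - 1))) • g (b - 2) := by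
    rw [Finset.sum_range_succ, Finset.sum_range_succ, hK K le_rfl, hK (K + 1) (by omega)]
    simp
  rw [h, Finset.sum_range_succ', Finset.sum_range_succ']
  simp only [Nat.cast_zero, zero_mul, mul_zero, zero_smul, add_zero, zero_add, Nat.cast_one,
    sub_self]
  refine Finset.sum_congr rfl fun b _ => ?_
  rw [← hrel b]
  congr 1
  push_cast; ring

section
variable (p : ℕ → ℝ) (q m : ℝ) (K : ℕ) (hp : ∀ b, 0 ≤ p b)
    (hK : ∀ b, K ≤ b → p b = 0) (h1 : ∑ b ∈ Finset.range K, p b = 1)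
    (hrel : ∀ b : ℕ, p (b + 2) * ((b + 1) * (b + 2)) = p b * ((q - b) * (m - b)))

theorem var_bound (p : ℕ → ℝ) (q m : ℝ) (K : ℕ)
    (hK : ∀ b, K ≤ b → p b = 0) (h1 : ∑ b ∈ Finset.range K, p b = 1)
    (hrel : ∀ b : ℕ, p (b + 2) * ((b + 1) * (b + 2)) = p b * ((q - b) * (m - b)))
    (hq : 0 ≤ q) (hm : 0 ≤ m) (hL : 4 ≤ q + m) :
    ∑ b ∈ Finset.range K, p b * (b - q * m / (q + m - 1)) ^ 2 ≤ q + m := by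
  have s1 := stein p q m K hK hrel (fun _ => (1 : ℝ))
  have s2 := stein p q m K hK hrel (fun b => (b : ℝ))
  simp only [smul_eq_mul, mul_one] at s1 s2
  set S1 := ∑ b ∈ Finset.range K, p b * b with hS1
  set S2 := ∑ b ∈ Finset.range K, p b * b ^ 2 with hS2
  set S3 := ∑ b ∈ Finset.range K, p b * b ^ 3 with hS3
  have e1 : ∑ b ∈ Finset.range K, p b * ((b : ℝ) * (b - 1)) = S2 - S1 := by
    rw [hS1, hS2, ← Finset.sum_sub_distrib]
    exact Finset.sum_congr rfl fun b _ => by ring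
  have e2 : ∑ b ∈ Finset.range K, p b * ((q - b) * (m - b)) = q * m * 1 - (q + m) * S1 + S2 := by
    rw [← h1, hS1, hS2, Finset.mul_sum, Finset.mul_sum, ← Finset.sum_sub_distrib,
      ← Finset.sum_add_distrib]
    exact Finset.sum_congr rfl fun b _ => by ring
  have e3 : ∑ b ∈ Finset.range K, p b * ((b : ℝ) * (b - 1)) * ((b - 2 : ℕ) : ℝ)
      = S3 - 3 * S2 + 2 * S1 := by
    rw [hS1, hS2, hS3, Finset.mul_sum, Finset.mul_sum, ← Finset.sum_sub_distrib,
      ← Finset.sum_add_distrib]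
    refine Finset.sum_congr rfl fun b _ => ?_
    rcases b with _ | _ | b
    · simp
    · simp; ring
    · simp; ring
  have e4 : ∑ b ∈ Finset.range K, p b * ((q - b) * (m - b)) * b
      = q * m * S1 - (q + m) * S2 + S3 := by
    rw [hS1, hS2, hS3, Finset.mul_sum, Finset.mul_sum, ← Finset.sum_sub_distrib,
      ← Finset.sum_add_distrib]
    exact Finset.sum_congr rfl fun b _ => by ring
  rw [e1, e2] at s1
  rw [e3, e4] at s2
  set L := q + m with hLd
  have hS1e : q * m = (L - 1) * S1 := by linarith
  have hmu : q * m / (L - 1) = S1 := by rw [hS1e]; exact mul_div_cancel_left₀ _ (by linarith)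
  have hS2e : (L - 3) * S2 = (q * m - 2) * S1 := by linarith
  rw [hmu]
  have e5 : ∑ b ∈ Finset.range K, p b * ((b : ℝ) - S1) ^ 2 = S2 - S1 ^ 2 := by
    have : S2 - S1 ^ 2 = S2 - 2 * S1 * S1 + S1 ^ 2 * 1 := by ring
    have g1 : ∀ x : ℝ, x * S1 = ∑ b ∈ Finset.range K, x * (p b * b) := fun x => Finset.mul_sum _ _ _
    have g2 : ∀ x : ℝ, x * 1 = ∑ b ∈ Finset.range K, x * p b := fun x => by
      rw [← h1, Finset.mul_sum]
    rw [this, g1, g2, hS2, ← Finset.sum_sub_distrib, ← Finset.sum_add_distrib]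
    exact Finset.sum_congr rfl fun b _ => by ring
  rw [e5]
  have hS1n : 0 ≤ S1 := by rw [← hmu]; exact div_nonneg (mul_nonneg hq hm) (by linarith)
  have hS1L : S1 ≤ L / 3 := by
    rw [← hmu, div_le_iff₀ (by linarith)]
    nlinarith [sq_nonneg (q - m)]
  have hV : (L - 3) * (S2 - S1 ^ 2) ≤ (L - 3) * L := by
    have : (L - 3) * (S2 - S1 ^ 2) = 2 * S1 ^ 2 - 2 * S1 := by
      rw [mul_sub, hS2e, hS1e]; ring
    rw [this]
    nlinarith
  exact le_of_mul_le_mul_left hV (by linarith)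

theorem abs_bound (p : ℕ → ℝ) (μ L : ℝ) (K : ℕ) (hp : ∀ b, 0 ≤ p b)
    (h1 : ∑ b ∈ Finset.range K, p b = 1) (hL : 0 < L)
    (hv : ∑ b ∈ Finset.range K, p b * (b - μ) ^ 2 ≤ L) :
    ∑ b ∈ Finset.range K, p b * |b - μ| ≤ Real.sqrt L := by
  have hs : 0 < Real.sqrt L := Real.sqrt_pos.2 hL
  have hss : Real.sqrt L * Real.sqrt L = L := Real.mul_self_sqrt hL.le
  have h : ∑ b ∈ Finset.range K, p b * (2 * Real.sqrt L * |b - μ|) ≤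
      ∑ b ∈ Finset.range K, p b * (L + (b - μ) ^ 2) := by
    refine Finset.sum_le_sum fun b _ => mul_le_mul_of_nonneg_left ?_ (hp b)
    nlinarith [sq_nonneg (Real.sqrt L - |(b : ℝ) - μ|), sq_abs ((b : ℝ) - μ)]
  have e1 : ∑ b ∈ Finset.range K, p b * (2 * Real.sqrt L * |b - μ|) =
      2 * Real.sqrt L * ∑ b ∈ Finset.range K, p b * |b - μ| := by
    rw [Finset.mul_sum]; exact Finset.sum_congr rfl fun b _ => by ring
  have e2 : ∑ b ∈ Finset.range K, p b * (L + (b - μ) ^ 2) =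
      L * 1 + ∑ b ∈ Finset.range K, p b * (b - μ) ^ 2 := by
    rw [← h1, Finset.mul_sum, ← Finset.sum_add_distrib]
    exact Finset.sum_congr rfl fun b _ => by ring
  rw [e1, e2] at h
  nlinarith

theorem char_bound (p : ℕ → ℝ) (q m : ℝ) (K : ℕ) (hp : ∀ b, 0 ≤ p b)
    (hK : ∀ b, K ≤ b → p b = 0) (h1 : ∑ b ∈ Finset.range K, p b = 1)
    (hrel : ∀ b : ℕ, p (b + 2) * ((b + 1) * (b + 2)) = p b * ((q - b) * (m - b)))
    (hq : 0 ≤ q) (hm : 0 ≤ m) (hL : 4 ≤ q + m) (hKq : ∀ b, p b ≠ 0 → (b : ℝ) ≤ q)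
    (h R : ℝ) (hh : 0 < h) (hR : 0 ≤ R) (hhR : 2 * R * h ≤ 1) (L μ κ : ℝ) (hLd : L = q + m)
    (hμ : μ = q * m / (q + m - 1)) (hκ : κ = μ ^ 2 / (L - 1)) (θ : ℝ) (hθ : |θ| ≤ R) :
    ‖∑ b ∈ Finset.range K, (p b : ℂ) * Complex.exp ((θ * (h * (b - μ)) : ℝ) * Complex.I) -
      Complex.exp (-(θ : ℂ) ^ 2 / 2)‖ ≤
      Real.exp (R ^ 2 / 2) * R * (R * |1 - 2 * h ^ 2 * κ| + 4 * R ^ 2 * h ^ 3 * κ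
        + 12 * R * h ^ 2 * (L * Real.sqrt L / (L - 1))) := by
  set ε := (R * |1 - 2 * h ^ 2 * κ| + 4 * R ^ 2 * h ^ 3 * κ
        + 12 * R * h ^ 2 * (L * Real.sqrt L / (L - 1))) with hε
  have hL4 : 4 ≤ L := hLd ▸ hL
  have hμ0 : 0 ≤ μ := by rw [hμ]; exact div_nonneg (mul_nonneg hq hm) (by linarith)
  have hμL : μ ≤ L := by
    rw [hμ, hLd, div_le_iff₀ (by linarith)]
    nlinarith [sq_nonneg (q - m)]
  have hκ0 : 0 ≤ κ := by rw [hκ]; exact div_nonneg (sq_nonneg _) (by linarith)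
  have hsq : 0 ≤ L * Real.sqrt L / (L - 1) :=
    div_nonneg (mul_nonneg (by linarith) (Real.sqrt_nonneg _)) (by linarith)
  have hε0 : 0 ≤ ε := by
    rw [hε]; positivity
  let f : ℝ → ℕ → ℂ := fun θ b => Complex.exp ((θ * (h * (b - μ)) : ℝ) * Complex.I)
  have hf1 : ∀ θ b, ‖f θ b‖ = 1 := fun θ b => Complex.norm_exp_ofReal_mul_I _
  let ph : ℝ → ℂ := fun θ => ∑ b ∈ Finset.range K, (p b : ℂ) * f θ b
  let D : ℝ → ℂ := fun θ =>
    Complex.I * h * ∑ b ∈ Finset.range K, (p b : ℂ) * ((b : ℂ) - μ) * f θ b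
  have hph1 : ∀ θ, ‖ph θ‖ ≤ 1 := by
    intro θ
    refine (norm_sum_le _ _).trans ?_
    rw [← h1]
    refine Finset.sum_le_sum fun b _ => ?_
    rw [norm_mul, hf1, mul_one, Complex.norm_real, Real.norm_of_nonneg (hp b)]
  have hder : ∀ θ, HasDerivAt ph (D θ) θ := by
    intro θ
    have : D θ = ∑ b ∈ Finset.range K, (p b : ℂ) * (f θ b * ((h * (b - μ) : ℝ) * Complex.I)) := by
      simp only [D]
      rw [Finset.mul_sum]
      refine Finset.sum_congr rfl fun b _ => ?_
      push_cast; ring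
    rw [this]
    refine HasDerivAt.fun_sum fun b _ => HasDerivAt.const_mul _ ?_
    have h0 : HasDerivAt (fun θ : ℝ => ((θ * (h * (b - μ)) : ℝ) : ℂ) * Complex.I)
        ((h * (b - μ) : ℝ) * Complex.I) θ := by
      have := ((hasDerivAt_id θ).mul_const (h * (b - μ))).ofReal_comp.mul_const Complex.I
      simpa using this
    exact h0.cexp
  -- Stein identity
  have hst : ∀ θ, D θ * (L - 1) = Complex.I * h * (1 - Complex.exp ((-2 * θ * h : ℝ) * Complex.I)) *
      ∑ b ∈ Finset.range K, (p b : ℂ) * (b * (b - 1)) * f θ b := by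
    intro θ
    have s := stein p q m K hK hrel (f θ)
    have a1 : ∑ b ∈ Finset.range K, (p b * (b * (b - 1))) • f θ (b - 2) =
        Complex.exp ((-2 * θ * h : ℝ) * Complex.I) *
        ∑ b ∈ Finset.range K, (p b : ℂ) * (b * (b - 1)) * f θ b := by
      rw [Finset.mul_sum]
      refine Finset.sum_congr rfl fun b _ => ?_
      rcases b with _ | _ | b
      · simp
      · simp
      · have : f θ b = Complex.exp ((-2 * θ * h : ℝ) * Complex.I) * f θ (b + 2) := by
          simp only [f]
          rw [← Complex.exp_add]
          congr 1; push_cast; ring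
        simp only [Nat.add_sub_cancel, add_assoc, Nat.reduceAdd]
        rw [this, Complex.real_smul]
        push_cast; ring
    have a2 : ∑ b ∈ Finset.range K, (p b * ((q - b) * (m - b))) • f θ b =
        ∑ b ∈ Finset.range K, (p b : ℂ) * (b * (b - 1)) * f θ b -
        (L - 1) * ∑ b ∈ Finset.range K, (p b : ℂ) * ((b : ℂ) - μ) * f θ b := by
      rw [Finset.mul_sum, ← Finset.sum_sub_distrib]
      refine Finset.sum_congr rfl fun b _ => ?_
      have e : q * m = (L - 1) * μ := by
        rw [hμ, ← hLd]; have : L - 1 ≠ 0 := by linarith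
        field_simp
      have : p b * ((q - b) * (m - b)) = p b * (b * (b - 1)) - (L - 1) * (p b * (b - μ)) := by
        have : (q - b) * (m - b) = (L - 1) * μ - L * b + b ^ 2 := by rw [← e, hLd]; ring
        rw [this]; ring
      rw [this, Complex.real_smul]
      push_cast; ring
    rw [a1, a2] at s
    simp only [D]
    linear_combination (Complex.I * h) * s
  have hr : ∀ θ, ‖∑ b ∈ Finset.range K, (p b : ℂ) * (b * (b - 1)) * f θ b - μ ^ 2 * ph θ‖
      ≤ 3 * (L * Real.sqrt L) := by
    intro θ
    have hab := abs_bound p μ L K hp h1 (by linarith)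
      (by rw [hμ, hLd]; exact var_bound p q m K hK h1 hrel hq hm hL)
    have hs1 : 1 ≤ Real.sqrt L := Real.one_le_sqrt.2 (by linarith)
    simp only [ph]
    rw [Finset.mul_sum, ← Finset.sum_sub_distrib]
    calc _ ≤ ∑ b ∈ Finset.range K, p b * (2 * L * |b - μ| + L) := by
          refine (norm_sum_le _ _).trans (Finset.sum_le_sum fun b _ => ?_)
          have : (p b : ℂ) * (b * (b - 1)) * f θ b - μ ^ 2 * (p b * f θ b) =
            ((p b * (b * (b - 1) - μ ^ 2) : ℝ) : ℂ) * f θ b := by push_cast; ring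
          rw [this, norm_mul, hf1, mul_one, Complex.norm_real, Real.norm_eq_abs, abs_mul,
            abs_of_nonneg (hp b)]
          by_cases hb : p b = 0
          · simp [hb]
          refine mul_le_mul_of_nonneg_left ?_ (hp b)
          have hbq := hKq b hb
          have hb0 : (0 : ℝ) ≤ b := Nat.cast_nonneg b
          have : (b : ℝ) * (b - 1) - μ ^ 2 = (b - μ) * (b + μ) - b := by ring
          rw [this]
          refine (abs_sub _ _).trans ?_
          rw [abs_mul, abs_of_nonneg hb0, abs_of_nonneg (by linarith : 0 ≤ (b : ℝ) + μ)]
          nlinarith [abs_nonneg ((b : ℝ) - μ)]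
      _ = 2 * L * (∑ b ∈ Finset.range K, p b * |b - μ|) + L * 1 := by
          rw [← h1, Finset.mul_sum, Finset.mul_sum, ← Finset.sum_add_distrib]
          exact Finset.sum_congr rfl fun b _ => by ring
      _ ≤ _ := by nlinarith
  have hkey : ∀ θ, |θ| ≤ R → ‖D θ + θ * ph θ‖ ≤ ε := by
    intro θ hθ
    set S := ∑ b ∈ Finset.range K, (p b : ℂ) * (b * (b - 1)) * f θ b with hS
    set z : ℂ := (-2 * θ * h : ℝ) * Complex.I with hz
    set r := S - μ ^ 2 * ph θ with hrd
    set e := Complex.exp z - 1 - z with he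
    have hzn : ‖z‖ = 2 * |θ| * h := by
      rw [hz, norm_mul, Complex.norm_I, mul_one, Complex.norm_real, Real.norm_eq_abs, abs_mul,
        abs_mul, abs_of_pos hh]; norm_num
    have hz1 : ‖z‖ ≤ 1 := by rw [hzn]; nlinarith
    have hen : ‖e‖ ≤ ‖z‖ ^ 2 := Complex.norm_exp_sub_one_sub_id_le hz1
    have hLc : (L : ℂ) - 1 ≠ 0 := by
      have : ((L - 1 : ℝ) : ℂ) ≠ 0 := by
        rw [Complex.ofReal_ne_zero]; linarith
      simpa using this
    have hD : D θ = Complex.I * h * (1 - Complex.exp z) * S / (L - 1) := by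
      rw [← hst θ]; field_simp
    have hκc : (κ : ℂ) = μ ^ 2 / (L - 1) := by rw [hκ]; push_cast; rfl
    have hze : (1 - Complex.exp z) = - z - e := by rw [he]; ring
    have hsplit : D θ + θ * ph θ = θ * ((1 - 2 * h ^ 2 * κ : ℝ) : ℂ) * ph θ
        + (- (Complex.I * h * e * κ * ph θ)) + Complex.I * h * (1 - Complex.exp z) * r / (L - 1) := by
      have hSr : S = μ ^ 2 * ph θ + r := by rw [hrd]; ring
      rw [hD, hSr]
      have : Complex.I * h * (1 - Complex.exp z) * (μ ^ 2 * ph θ + r) / (L - 1) =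
        Complex.I * h * (1 - Complex.exp z) * κ * ph θ +
          Complex.I * h * (1 - Complex.exp z) * r / (L - 1) := by
        rw [hκc]; field_simp
      rw [this, hze, hz]
      push_cast
      linear_combination (2 * θ * h ^ 2 * κ * ph θ) * Complex.I_sq
    rw [hsplit, hε]
    refine (norm_add₃_le).trans ?_
    have hLn : ‖(L : ℂ) - 1‖ = L - 1 := by
      have : ((L : ℂ) - 1) = ((L - 1 : ℝ) : ℂ) := by push_cast; rfl
      rw [this, Complex.norm_real, Real.norm_of_nonneg (by linarith)]
    have hθ0 := abs_nonneg θ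
    refine add_le_add (add_le_add ?_ ?_) ?_
    · rw [norm_mul, norm_mul, Complex.norm_real, Complex.norm_real, Real.norm_eq_abs,
        Real.norm_eq_abs]
      calc _ ≤ |θ| * |1 - 2 * h ^ 2 * κ| * 1 := by gcongr; exact hph1 θ
        _ ≤ _ := by rw [mul_one]; gcongr
    · rw [norm_neg, norm_mul, norm_mul, norm_mul, norm_mul, Complex.norm_I, Complex.norm_real,
        Complex.norm_real, Real.norm_of_nonneg hh.le, Real.norm_of_nonneg hκ0, one_mul]
      calc _ ≤ h * (2 * R * h) ^ 2 * κ * 1 := by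
            gcongr
            · exact hen.trans (by rw [hzn]; gcongr)
            · exact hph1 θ
        _ = _ := by ring
    · rw [norm_div, hLn, norm_mul, norm_mul, norm_mul, Complex.norm_I, Complex.norm_real,
        Real.norm_of_nonneg hh.le, one_mul]
      have : ‖1 - Complex.exp z‖ ≤ 4 * R * h := by
        rw [hze]
        calc ‖-z - e‖ ≤ ‖-z‖ + ‖e‖ := norm_sub_le _ _
          _ ≤ ‖z‖ + ‖z‖ ^ 2 := by rw [norm_neg]; gcongr
          _ ≤ 2 * ‖z‖ := by nlinarith [norm_nonneg z]
          _ = 4 * |θ| * h := by rw [hzn]; ring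
          _ ≤ _ := by gcongr
      calc _ ≤ h * (4 * R * h) * (3 * (L * Real.sqrt L)) / (L - 1) := by
            have : 0 < L - 1 := by linarith
            gcongr
            exact hr θ
        _ = _ := by ring
  -- integrate
  let G : ℝ → ℂ := fun θ => ph θ * Complex.exp ((θ : ℂ) ^ 2 / 2)
  have hG : ∀ θ, HasDerivAt G ((D θ + θ * ph θ) * Complex.exp ((θ : ℂ) ^ 2 / 2)) θ := by
    intro θ
    have h0 : HasDerivAt (fun θ : ℝ => (θ : ℂ) ^ 2 / 2) (θ : ℂ) θ := by
      have := (((hasDerivAt_id θ).ofReal_comp).pow 2).div_const (2 : ℂ)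
      simpa using this
    have := (hder θ).mul h0.cexp
    refine this.congr_deriv ?_
    ring
  have hexp : ∀ θ : ℝ, ‖Complex.exp ((θ : ℂ) ^ 2 / 2)‖ = Real.exp (θ ^ 2 / 2) := by
    intro θ
    rw [← Complex.norm_of_nonneg (Real.exp_pos _).le]
    congr 1; push_cast; rfl
  have hmv := Convex.norm_image_sub_le_of_norm_hasDerivWithin_le (f := G) (x := 0) (y := θ)
    (s := Set.Icc (-R) R) (C := ε * Real.exp (R ^ 2 / 2))
    (fun x _ => (hG x).hasDerivWithinAt) (fun x hx => by
      rw [norm_mul, hexp]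
      have hx' : |x| ≤ R := abs_le.2 hx
      refine mul_le_mul (hkey x hx') (Real.exp_le_exp.2 ?_) (Real.exp_pos _).le hε0
      · refine div_le_div_of_nonneg_right ?_ (by norm_num)
        exact sq_le_sq' (abs_le.1 hx').1 (abs_le.1 hx').2) (convex_Icc _ _)
    ⟨by linarith, hR⟩ (abs_le.1 hθ)
  have hG0 : G 0 = 1 := by
    simp only [G, ph, f]
    simp only [zero_mul, Complex.ofReal_zero, Complex.exp_zero, mul_one]
    rw [← Complex.ofReal_sum, h1]
    simp
  rw [hG0] at hmv
  have hfin : ph θ - Complex.exp (-(θ : ℂ) ^ 2 / 2) = (G θ - 1) * Complex.exp (-(θ : ℂ) ^ 2 / 2) := by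
    simp only [G]
    rw [sub_mul, mul_assoc, ← Complex.exp_add, one_mul]
    have : (θ : ℂ) ^ 2 / 2 + -(θ : ℂ) ^ 2 / 2 = 0 := by ring
    rw [this, Complex.exp_zero, mul_one]
  show ‖ph θ - _‖ ≤ _
  rw [hfin, norm_mul]
  have hexp2 : ‖Complex.exp (-(θ : ℂ) ^ 2 / 2)‖ ≤ 1 := by
    have : Complex.exp (-(θ : ℂ) ^ 2 / 2) = ((Real.exp (-θ ^ 2 / 2) : ℝ) : ℂ) := by
      push_cast; rfl
    rw [this, Complex.norm_of_nonneg (Real.exp_pos _).le, Real.exp_le_one_iff]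
    nlinarith [sq_nonneg θ]
  calc _ ≤ ε * Real.exp (R ^ 2 / 2) * ‖θ - 0‖ * 1 := by gcongr
    _ ≤ ε * Real.exp (R ^ 2 / 2) * R * 1 := by
      gcongr; simpa using hθ
    _ = _ := by ring
end

noncomputable def ew (q b : ℕ) : ℝ :=
  if b ≤ q ∧ Even (q - b) then (q ! : ℝ) / ((q - b)‼ : ℝ) else 0

noncomputable def wt (q m b : ℕ) : ℝ := ew q b * ew m b / (b ! : ℝ)

theorem ew_nonneg (q b : ℕ) : 0 ≤ ew q b := by
  unfold ew; split_ifs <;> positivity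

theorem wt_nonneg (q m b : ℕ) : 0 ≤ wt q m b :=
  div_nonneg (mul_nonneg (ew_nonneg _ _) (ew_nonneg _ _)) (by positivity)

theorem ew_of_lt {q b : ℕ} (h : q < b) : ew q b = 0 := by
  unfold ew; rw [if_neg]; omega

theorem ew_add (b k : ℕ) (hk : Even k) : ew (b + k) b = ((b + k)! : ℝ) / (k‼ : ℝ) := by
  unfold ew; rw [if_pos ⟨by omega, by simpa using hk⟩]; simp

theorem ew_odd (b k : ℕ) (hk : ¬ Even k) : ew (b + k) b = 0 := by
  unfold ew; rw [if_neg]; simp [hk]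

theorem df_pos (k : ℕ) : (0 : ℝ) < (k‼ : ℝ) := by
  exact_mod_cast Nat.doubleFactorial_pos k

theorem ew_rel1 (q b : ℕ) : ew q (b + 2) = ((q : ℝ) - b) * ew q b := by
  rcases lt_or_ge q b with h | h
  · rw [ew_of_lt h, ew_of_lt (by omega)]; simp
  obtain ⟨k, rfl⟩ := Nat.exists_eq_add_of_le h
  rcases k with _ | _ | k
  · rw [ew_of_lt (by omega)]; simp
  · rw [ew_of_lt (by omega), ew_odd _ _ (by simp)]; simp
  · by_cases hk : Even k
    · have h2 := ew_add (b + 2) k hk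
      rw [show b + (k + 1 + 1) = b + 2 + k by ring, h2]
      have h3 := ew_add b (k + 2) (by simpa [Nat.even_add] using hk)
      rw [show b + 2 + k = b + (k + 2) by ring, h3, Nat.doubleFactorial_add_two]
      have := df_pos k
      push_cast
      field_simp
      ring
    · have h2 := ew_odd (b + 2) k hk
      have h3 := ew_odd b (k + 2) (by simpa [Nat.even_add] using hk)
      rw [show b + (k + 1 + 1) = b + 2 + k by ring, h2, 
        show b + 2 + k = b + (k + 2) by ring, h3]; simp

theorem ew_rel2 (q b : ℕ) :
    ew (q + 2) b * ((q : ℝ) + 2 - b) = (q + 2) * (q + 1) * ew q b := by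
  rcases lt_or_ge q b with h | h
  · rw [ew_of_lt h]
    rcases (by omega : b = q + 1 ∨ b = q + 2 ∨ q + 2 < b) with h | h | h
    · rw [h, show q + 2 = q + 1 + 1 by ring, ew_odd _ _ (by simp)]; simp
    · rw [h]; push_cast; ring
    · rw [ew_of_lt h]; simp
  obtain ⟨k, rfl⟩ := Nat.exists_eq_add_of_le h
  by_cases hk : Even k
  · have h3 := ew_add b (k + 2) (by simpa [Nat.even_add] using hk)
    rw [ew_add b k hk, add_assoc, h3, Nat.doubleFactorial_add_two, ← add_assoc,
      Nat.factorial_succ, Nat.factorial_succ]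
    have := df_pos k
    push_cast
    field_simp
    ring
  · have h3 := ew_odd b (k + 2) (by simpa [Nat.even_add] using hk)
    rw [ew_odd b k hk, add_assoc, h3]; simp

theorem wt_rel (q m b : ℕ) :
    wt q m (b + 2) * (((b : ℝ) + 1) * (b + 2)) = wt q m b * (((q : ℝ) - b) * ((m : ℝ) - b)) := by
  unfold wt
  rw [ew_rel1, ew_rel1, Nat.factorial_succ, Nat.factorial_succ]
  have : (b ! : ℝ) ≠ 0 := by positivity
  push_cast
  field_simp
  ring

theorem wt_pos (q m : ℕ) (h : Even (q + m)) : 0 < wt q m (q % 2) := by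
  have a : ∀ q : ℕ, 0 < ew q (q % 2) := by
    intro q
    unfold ew
    rw [if_pos]
    · have := df_pos (q - q % 2)
      positivity
    · refine ⟨Nat.mod_le _ _, ?_⟩
      rw [Nat.even_iff]; omega
  have e : m % 2 = q % 2 := by rw [Nat.even_iff] at h; omega
  have := a q
  have := a m
  rw [e] at this
  unfold wt
  positivity

noncomputable def TT (q b k : ℕ) : ℝ :=
  (∏ j ∈ Finset.range k, ((q - b - 2 * j : ℕ) : ℝ) / ((q - j : ℕ) : ℝ)) / (k ! : ℝ)

noncomputable def rho (q b : ℕ) : ℝ := ∑' k, (-1) ^ k * TT q b k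

theorem TT_nonneg (q b k : ℕ) : 0 ≤ TT q b k := by unfold TT; positivity

theorem TT_le (q b k : ℕ) : TT q b k ≤ 1 / (k ! : ℝ) := by
  unfold TT
  gcongr
  refine Finset.prod_le_one (fun j _ => by positivity) fun j _ => ?_
  refine div_le_one_of_le₀ ?_ (by positivity)
  exact_mod_cast (by omega : q - b - 2 * j ≤ q - j)

theorem choose_aux (r k : ℕ) : (r + k + 1).choose (k + 1) * ((k + 1) * (r + k + 2)) =
    (r + k + 2).choose k * ((r + 2) * (r + 1)) := by
  have h1 := Nat.choose_mul_factorial_mul_factorial (show k + 1 ≤ r + k + 1 by omega)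
  have h2 := Nat.choose_mul_factorial_mul_factorial (show k ≤ r + k + 2 by omega)
  rw [show r + k + 1 - (k + 1) = r by omega, Nat.factorial_succ k] at h1
  rw [show r + k + 2 - k = r + 2 by omega, Nat.factorial_succ (r + 1), Nat.factorial_succ r,
    Nat.factorial_succ (r + k + 1), ← h1] at h2
  have hp : 0 < k ! * r ! := by positivity
  refine Nat.eq_of_mul_eq_mul_right hp ?_
  linarith

theorem choose_ew (q b k : ℕ) (hk : 2 * k ≤ q) :
    ((q - k).choose k : ℝ) * ew (q - 2 * k) b = TT q b k * ew q b := by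
  induction k with
  | zero => simp [TT]
  | succ k ih =>
    have ih := ih (by omega)
    obtain ⟨r, rfl⟩ := Nat.exists_eq_add_of_le hk
    rw [show 2 * (k + 1) + r - 2 * (k + 1) = r by omega,
      show 2 * (k + 1) + r - (k + 1) = r + k + 1 by omega]
    rw [show 2 * (k + 1) + r - 2 * k = r + 2 by omega,
      show 2 * (k + 1) + r - k = r + k + 2 by omega] at ih
    have hT : TT (2 * (k + 1) + r) b (k + 1) * ((k + 1) * (r + k + 2)) =
        TT (2 * (k + 1) + r) b k * ((r + 2 - b : ℕ) : ℝ) := by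
      unfold TT
      rw [Finset.prod_range_succ, show 2 * (k + 1) + r - k = r + k + 2 by omega,
        show 2 * (k + 1) + r - b - 2 * k = r + 2 - b by omega, Nat.factorial_succ]
      push_cast
      field_simp
    have hb : ew (r + 2) b * ((r + 2 - b : ℕ) : ℝ) = (r + 2) * (r + 1) * ew r b := by
      rw [← ew_rel2]
      rcases le_or_gt b (r + 2) with h | h
      · rw [Nat.cast_sub h]; push_cast; ring
      · rw [ew_of_lt h]; simp
    have hc : ((r + k + 1).choose (k + 1) : ℝ) * ((k + 1) * (r + k + 2)) =
      ((r + k + 2).choose k : ℝ) * ((r + 2) * (r + 1)) := by exact_mod_cast choose_aux r k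
    have hpos : ((k : ℝ) + 1) * (r + k + 2) ≠ 0 := by positivity
    refine mul_right_cancel₀ hpos ?_
    calc _ = (((r + k + 1).choose (k + 1) : ℝ) * ((k + 1) * (r + k + 2))) * ew r b := by ring
      _ = ((r + k + 2).choose k : ℝ) * (ew (r + 2) b * ((r + 2 - b : ℕ) : ℝ)) := by
        rw [hc, hb]; ring
      _ = (((r + k + 2).choose k : ℝ) * ew (r + 2) b) * ((r + 2 - b : ℕ) : ℝ) := by ring
      _ = (TT (2 * (k + 1) + r) b k * ((r + 2 - b : ℕ) : ℝ)) * ew (2 * (k + 1) + r) b := by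
        rw [ih]; ring
      _ = _ := by rw [← hT]; ring

theorem TT_zero (q b k : ℕ) (h : ew q b ≠ 0) (hk : q < 2 * k) : TT q b k = 0 := by
  unfold TT
  rw [Finset.prod_eq_zero (i := k - 1), zero_div]
  · simp; omega
  · have : b ≤ q ∧ Even (q - b) := by
      by_contra hh; exact h (by unfold ew; rw [if_neg hh])
    have h2 := Nat.even_iff.1 this.2
    rw [show q - b - 2 * (k - 1) = 0 by omega]; simp

theorem sum_rho (q m b : ℕ) :
    ∑ k ∈ Finset.range (q + 1), (-1) ^ k * ((q - k).choose k : ℝ) * wt (q - 2 * k) m b =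
      wt q m b * rho q b := by
  by_cases h : ew q b = 0
  · have : wt q m b = 0 := by unfold wt; rw [h]; simp
    rw [this, zero_mul]
    refine Finset.sum_eq_zero fun k _ => ?_
    rcases le_or_gt (2 * k) q with hk | hk
    · have := choose_ew q b k hk
      rw [h, mul_zero] at this
      unfold wt
      rw [show (-1 : ℝ) ^ k * ((q - k).choose k : ℝ) * (ew (q - 2 * k) b * ew m b / (b ! : ℝ)) =
        (-1) ^ k * (((q - k).choose k : ℝ) * ew (q - 2 * k) b) * ew m b / (b ! : ℝ) by ring, this]
      simp
    · rw [Nat.choose_eq_zero_of_lt (by omega)]; simp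
  · have : rho q b = ∑ k ∈ Finset.range (q + 1), (-1) ^ k * TT q b k := by
      unfold rho
      refine tsum_eq_sum fun k hk => ?_
      rw [TT_zero q b k h (by simp at hk; omega), mul_zero]
    rw [this, Finset.mul_sum]
    refine Finset.sum_congr rfl fun k _ => ?_
    unfold wt
    rcases le_or_gt (2 * k) q with hk | hk
    · have := choose_ew q b k hk
      rw [show (-1 : ℝ) ^ k * ((q - k).choose k : ℝ) * (ew (q - 2 * k) b * ew m b / (b ! : ℝ)) =
        (-1) ^ k * (((q - k).choose k : ℝ) * ew (q - 2 * k) b) * ew m b / (b ! : ℝ) by ring, this]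
      ring
    · rw [Nat.choose_eq_zero_of_lt (by omega), TT_zero q b k h hk]; simp

theorem sfac : Summable (fun k : ℕ => 1 / (k ! : ℝ)) := by
  simpa using Real.summable_pow_div_factorial 1

theorem rho_abs (q b : ℕ) : |rho q b| ≤ 3 := by
  have h0 : ∀ k, ‖(-1) ^ k * TT q b k‖ ≤ 1 / (k ! : ℝ) := fun k => by
    rw [norm_mul, norm_pow, norm_neg, norm_one, one_pow, one_mul,
      Real.norm_of_nonneg (TT_nonneg _ _ _)]
    exact TT_le q b k
  have := tsum_of_norm_bounded sfac.hasSum h0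
  have e : ∑' k : ℕ, 1 / (k ! : ℝ) = Real.exp 1 := by
    rw [Real.exp_eq_exp_ℝ, NormedSpace.exp_eq_tsum_div]; simp
  rw [e] at this
  have := Real.exp_one_lt_d9
  unfold rho
  rw [← Real.norm_eq_abs]
  linarith

theorem rho_lim (y : ℝ) (hy : y < 1) (ε : ℝ) (hε : 0 < ε) : ∃ δ > 0, ∃ Q : ℕ, ∀ q ≥ Q, ∀ b : ℕ,
    |(b : ℝ) / q - y| < δ → |rho q b - Real.exp (-(1 - y))| < ε := by
  let F : Filter (ℕ × ℕ) := comap (fun p => (p.1, (p.2 : ℝ) / p.1)) (atTop ×ˢ 𝓝 y)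
  have hF : Tendsto (fun p : ℕ × ℕ => (p.1, (p.2 : ℝ) / p.1)) F (atTop ×ˢ 𝓝 y) := tendsto_comap
  have hF1 : Tendsto (fun p : ℕ × ℕ => p.1) F atTop :=
    (tendsto_fst (f := (atTop : Filter ℕ)) (g := 𝓝 y)).comp hF
  have hF2 : Tendsto (fun p : ℕ × ℕ => (p.2 : ℝ) / p.1) F (𝓝 y) :=
    (tendsto_snd (f := (atTop : Filter ℕ)) (g := 𝓝 y)).comp hF
  have hinv : Tendsto (fun p : ℕ × ℕ => 1 / (p.1 : ℝ)) F (𝓝 0) :=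
    (tendsto_one_div_atTop_nhds_zero_nat (𝕜 := ℝ)).comp hF1
  have hfac : ∀ j : ℕ, Tendsto (fun p : ℕ × ℕ =>
      ((p.1 - p.2 - 2 * j : ℕ) : ℝ) / ((p.1 - j : ℕ) : ℝ)) F (𝓝 (1 - y)) := by
    intro j
    have hn : Tendsto (fun p : ℕ × ℕ => 1 - (p.2 : ℝ) / p.1 - 2 * j * (1 / (p.1 : ℝ))) F
        (𝓝 (1 - y)) := by
      simpa using (tendsto_const_nhds.sub hF2).sub (hinv.const_mul (2 * (j : ℝ)))
    have hd : Tendsto (fun p : ℕ × ℕ => 1 - j * (1 / (p.1 : ℝ))) F (𝓝 1) := by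
      simpa using (tendsto_const_nhds (x := (1 : ℝ))).sub (hinv.const_mul (j : ℝ))
    have := hn.div hd one_ne_zero
    rw [div_one] at this
    refine this.congr' ?_
    filter_upwards [hF1.eventually_gt_atTop j, hn.eventually (lt_mem_nhds (sub_pos.2 hy))]
      with p hp hp2
    have hp0 : (0 : ℝ) < p.1 := by exact_mod_cast (by omega : 0 < p.1)
    have e1 : 1 - (p.2 : ℝ) / p.1 - 2 * j * (1 / (p.1 : ℝ)) = ((p.1 : ℝ) - p.2 - 2 * j) / p.1 := by
      field_simp
    have hlt : p.2 + 2 * j < p.1 := by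
      rw [e1, lt_div_iff₀ hp0] at hp2
      have : (p.2 : ℝ) + 2 * j < p.1 := by linarith
      exact_mod_cast this
    rw [Pi.div_apply, e1, Nat.sub_sub, Nat.cast_sub hlt.le, Nat.cast_sub hp.le]
    have : (0 : ℝ) < p.1 - j := by
      have : (j : ℝ) < p.1 := by exact_mod_cast hp
      linarith
    push_cast
    field_simp
    ring
  have hT : ∀ k, Tendsto (fun p : ℕ × ℕ => (-1) ^ k * TT p.1 p.2 k) F
      (𝓝 ((-(1 - y)) ^ k / (k ! : ℝ))) := by
    intro k
    have h := ((tendsto_finsetProd (Finset.range k) fun j _ => hfac j).div_const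
      (k ! : ℝ)).const_mul ((-1 : ℝ) ^ k)
    have e : (-1 : ℝ) ^ k * ((∏ j ∈ Finset.range k, (1 - y)) / (k ! : ℝ)) =
        (-(1 - y)) ^ k / (k ! : ℝ) := by
      rw [Finset.prod_const, Finset.card_range, neg_pow (1 - y)]; ring
    rw [e] at h
    exact h
  have hlim : Tendsto (fun p : ℕ × ℕ => rho p.1 p.2) F (𝓝 (Real.exp (-(1 - y)))) := by
    have e : Real.exp (-(1 - y)) = ∑' k : ℕ, (-(1 - y)) ^ k / (k ! : ℝ) := by
      rw [Real.exp_eq_exp_ℝ, NormedSpace.exp_eq_tsum_div]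
    rw [e]
    refine tendsto_tsum_of_dominated_convergence sfac hT (Eventually.of_forall fun p k => ?_)
    rw [norm_mul, norm_pow, norm_neg, norm_one, one_pow, one_mul,
      Real.norm_of_nonneg (TT_nonneg _ _ _)]
    exact TT_le _ _ k
  have h := hlim.eventually (Metric.ball_mem_nhds _ hε)
  rw [eventually_comap, eventually_prod_iff] at h
  obtain ⟨pa, ha, pb, hb, hab⟩ := h
  obtain ⟨Q, hQ⟩ := eventually_atTop.1 ha
  obtain ⟨δ, hδ, hball⟩ := Metric.eventually_nhds_iff.1 hb
  refine ⟨δ, hδ, Q, fun q hq b hb => ?_⟩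
  have := hab (hQ q hq) (hball (y := (b : ℝ) / q) (by rwa [Real.dist_eq])) (q, b) rfl
  rwa [Real.dist_eq] at this


noncomputable def WS (q m K : ℕ) : ℝ := ∑ b ∈ Finset.range K, wt q m b
noncomputable def pp (q m K b : ℕ) : ℝ := wt q m b / WS q m K
noncomputable def mu (q m : ℕ) : ℝ := (q : ℝ) * m / ((q : ℝ) + m - 1)

theorem wt_zero (q m b : ℕ) (h : q < b) : wt q m b = 0 := by
  unfold wt; rw [ew_of_lt h]; simp

theorem WS_nonneg (q m K : ℕ) : 0 ≤ WS q m K := Finset.sum_nonneg fun _ _ => wt_nonneg _ _ _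

theorem WS_pos (q m K : ℕ) (h : Even (q + m)) (hK : q < K) : 0 < WS q m K :=
  Finset.sum_pos' (fun b _ => wt_nonneg _ _ _) ⟨q % 2, by
    simp; exact (Nat.mod_le _ _).trans_lt hK, wt_pos q m h⟩

theorem pp_nonneg (q m K b : ℕ) : 0 ≤ pp q m K b := div_nonneg (wt_nonneg _ _ _) (WS_nonneg _ _ _)

theorem pp_sum (q m K : ℕ) (h : Even (q + m)) (hK : q < K) :
    ∑ b ∈ Finset.range K, pp q m K b = 1 := by
  unfold pp; rw [← Finset.sum_div]; exact div_self (WS_pos q m K h hK).ne'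

theorem pp_zero (q m K b : ℕ) (h : q < b) : pp q m K b = 0 := by
  unfold pp; rw [wt_zero _ _ _ h]; simp

theorem pp_rel (q m K b : ℕ) :
    pp q m K (b + 2) * (((b : ℝ) + 1) * (b + 2)) =
      pp q m K b * (((q : ℝ) - b) * ((m : ℝ) - b)) := by
  unfold pp
  rw [div_mul_eq_mul_div, wt_rel, div_mul_eq_mul_div]

section
variable (c : ℝ) (hc0 : 0 < c) (hc2 : c < 2) (q : ℕ → ℕ)
    (hq : Tendsto (fun n => (q n : ℝ) / n) atTop (𝓝 c)) (d : ℕ)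

theorem ev_facts (c : ℝ) (hc0 : 0 < c) (hc2 : c < 2) (q : ℕ → ℕ)
    (hq : Tendsto (fun n => (q n : ℝ) / n) atTop (𝓝 c)) (d : ℕ) :
    ∀ᶠ n : ℕ in atTop, q n + d ≤ 2 * n ∧ 1 ≤ q n ∧ d + 4 ≤ n := by
  have hd : Tendsto (fun n : ℕ => (d : ℝ) * (1 / (n : ℝ))) atTop (𝓝 0) := by
    simpa using (tendsto_one_div_atTop_nhds_zero_nat (𝕜 := ℝ)).const_mul (d : ℝ)
  have h1 := hq.add hd
  rw [add_zero] at h1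
  filter_upwards [h1.eventually (gt_mem_nhds hc2), hq.eventually (lt_mem_nhds hc0),
    eventually_ge_atTop (d + 4)] with n a b e
  have hn : (0 : ℝ) < n := by exact_mod_cast (by omega : 0 < n)
  refine ⟨?_, ?_, e⟩
  · have : ((q n : ℝ) + d) / n < 2 := by
      rw [add_div]; rwa [mul_one_div] at a
    rw [div_lt_iff₀ hn] at this
    exact_mod_cast this.le
  · by_contra h
    have : q n = 0 := by omega
    rw [this] at b; simp at b

theorem m_lim (c : ℝ) (hc0 : 0 < c) (hc2 : c < 2) (q : ℕ → ℕ)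
    (hq : Tendsto (fun n => (q n : ℝ) / n) atTop (𝓝 c)) (d : ℕ) :
    Tendsto (fun n => ((2 * n - q n - d : ℕ) : ℝ) / n) atTop (𝓝 (2 - c)) := by
  have hd : Tendsto (fun n : ℕ => (d : ℝ) * (1 / (n : ℝ))) atTop (𝓝 0) := by
    simpa using (tendsto_one_div_atTop_nhds_zero_nat (𝕜 := ℝ)).const_mul (d : ℝ)
  have h := (hq.const_sub 2).sub hd
  rw [sub_zero] at h
  refine h.congr' ?_
  filter_upwards [ev_facts c hc0 hc2 q hq d] with n ⟨a, b, e⟩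
  have hn : (0 : ℝ) < n := by exact_mod_cast (by omega : 0 < n)
  rw [Nat.sub_sub, Nat.cast_sub a]
  push_cast
  field_simp
  ring

theorem L_lim (c : ℝ) (hc0 : 0 < c) (hc2 : c < 2) (q : ℕ → ℕ)
    (hq : Tendsto (fun n => (q n : ℝ) / n) atTop (𝓝 c)) (d : ℕ) :
    Tendsto (fun n => ((q n : ℝ) + (2 * n - q n - d : ℕ)) / n) atTop (𝓝 2) := by
  have := hq.add (m_lim c hc0 hc2 q hq d)
  rw [add_sub_cancel] at this
  exact this.congr fun n => by ring

theorem L1_lim (c : ℝ) (hc0 : 0 < c) (hc2 : c < 2) (q : ℕ → ℕ)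
    (hq : Tendsto (fun n => (q n : ℝ) / n) atTop (𝓝 c)) (d : ℕ) :
    Tendsto (fun n => ((q n : ℝ) + (2 * n - q n - d : ℕ) - 1) / n) atTop (𝓝 2) := by
  have := (L_lim c hc0 hc2 q hq d).sub (tendsto_one_div_atTop_nhds_zero_nat (𝕜 := ℝ))
  rw [sub_zero] at this
  exact this.congr fun n => by ring

theorem mu_lim (c : ℝ) (hc0 : 0 < c) (hc2 : c < 2) (q : ℕ → ℕ)
    (hq : Tendsto (fun n => (q n : ℝ) / n) atTop (𝓝 c)) (d : ℕ) :
    Tendsto (fun n => mu (q n) (2 * n - q n - d) / n) atTop (𝓝 (c * (2 - c) / 2)) := by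
  have := (hq.mul (m_lim c hc0 hc2 q hq d)).div (L1_lim c hc0 hc2 q hq d) two_ne_zero
  refine this.congr' ?_
  filter_upwards [eventually_gt_atTop 0] with n hn
  have hn : (n : ℝ) ≠ 0 := by exact_mod_cast hn.ne'
  simp only [Pi.div_apply, mu]
  generalize ((2 * n - q n - d : ℕ) : ℝ) = m
  rw [div_mul_div_comm, div_div_div_eq, div_div, div_eq_div_iff_comm]
  by_cases h : (q n : ℝ) + m - 1 = 0
  · simp [h]
  · field_simp

theorem inv_sqrt_lim : Tendsto (fun n : ℕ => 1 / Real.sqrt n) atTop (𝓝 0) := by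
  have : Tendsto (fun n : ℕ => Real.sqrt n) atTop atTop :=
    Real.tendsto_sqrt_atTop.comp tendsto_natCast_atTop_atTop
  simpa [Pi.inv_def] using this.inv_tendsto_atTop

theorem char_lim (c : ℝ) (hc0 : 0 < c) (hc2 : c < 2) (q : ℕ → ℕ)
    (hq : Tendsto (fun n => (q n : ℝ) / n) atTop (𝓝 c)) (d : ℕ) (hd : Even d) (θ : ℝ) :
    Tendsto (fun n : ℕ => ∑ b ∈ Finset.range (2 * n + 1),
      (pp (q n) (2 * n - q n - d) (2 * n + 1) b : ℂ) *
        Complex.exp ((θ * (1 / (c * (2 - c) / 2) * (1 / Real.sqrt n) *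
          (b - mu (q n) (2 * n - q n - d))) : ℝ) * Complex.I)) atTop
      (𝓝 (Complex.exp (-(θ : ℂ) ^ 2 / 2))) := by
  set s := c * (2 - c) / 2 with hs
  have hs0 : 0 < s := by rw [hs]; have : 0 < 2 - c := by linarith
                         positivity
  let h : ℕ → ℝ := fun n => 1 / s * (1 / Real.sqrt n)
  let L : ℕ → ℝ := fun n => (q n : ℝ) + (2 * n - q n - d : ℕ)
  let μ : ℕ → ℝ := fun n => mu (q n) (2 * n - q n - d)
  let κ : ℕ → ℝ := fun n => μ n ^ 2 / (L n - 1)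
  let R := |θ|
  have hlimL : Tendsto (fun n => L n / n) atTop (𝓝 2) := L_lim c hc0 hc2 q hq d
  have hlimL1 : Tendsto (fun n => (L n - 1) / n) atTop (𝓝 2) := L1_lim c hc0 hc2 q hq d
  have hlimμ : Tendsto (fun n => μ n / n) atTop (𝓝 s) := mu_lim c hc0 hc2 q hq d
  have hh : Tendsto h atTop (𝓝 0) := by
    have := inv_sqrt_lim.const_mul (1 / s)
    rwa [mul_zero] at this
  have hκ : Tendsto (fun n => h n ^ 2 * κ n) atTop (𝓝 (1 / 2)) := by
    have := ((hlimμ.pow 2).div hlimL1 two_ne_zero).const_mul (1 / s ^ 2)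
    rw [show 1 / s ^ 2 * (s ^ 2 / 2) = 1 / 2 by field_simp] at this
    refine this.congr' ?_
    filter_upwards [eventually_gt_atTop 0] with n hn
    have hn : (0 : ℝ) < n := by exact_mod_cast hn
    have e : h n ^ 2 = 1 / s ^ 2 * (1 / n) := by
      simp only [h]; rw [mul_pow, one_div_pow, one_div_pow, Real.sq_sqrt hn.le]
    simp only [Pi.div_apply, κ]
    rw [e]
    by_cases h0 : L n - 1 = 0
    · simp [h0]
    · field_simp
  have hlast : Tendsto (fun n => h n ^ 2 * (L n * Real.sqrt (L n) / (L n - 1))) atTop (𝓝 0) := by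
    have := (((hlimL.mul hlimL.sqrt).div hlimL1 two_ne_zero).mul inv_sqrt_lim).const_mul (1 / s ^ 2)
    rw [mul_zero, mul_zero] at this
    refine this.congr' ?_
    filter_upwards [eventually_gt_atTop 0] with n hn
    have hn : (0 : ℝ) < n := by exact_mod_cast hn
    have e : h n ^ 2 = 1 / s ^ 2 * (1 / n) := by
      simp only [h]; rw [mul_pow, one_div_pow, one_div_pow, Real.sq_sqrt hn.le]
    simp only [Pi.div_apply]
    rw [e, Real.sqrt_div' _ hn.le]
    have hsq : 0 < Real.sqrt n := Real.sqrt_pos.2 hn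
    by_cases h0 : L n - 1 = 0
    · simp [h0]
    · have e2 : (n : ℝ) = Real.sqrt n * Real.sqrt n := (Real.mul_self_sqrt hn.le).symm
      generalize Real.sqrt n = y at *
      rw [e2]
      field_simp
  have hbd : Tendsto (fun n => Real.exp (R ^ 2 / 2) * R * (R * |1 - 2 * h n ^ 2 * κ n|
      + 4 * R ^ 2 * h n ^ 3 * κ n + 12 * R * h n ^ 2 * (L n * Real.sqrt (L n) / (L n - 1))))
      atTop (𝓝 0) := by
    have a1 := ((((hκ.const_mul 2).const_sub 1).abs).const_mul R)
    have a2 := ((hκ.mul hh).const_mul (4 * R ^ 2))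
    have a3 := hlast.const_mul (12 * R)
    have a4 := ((a1.add a2).add a3).const_mul (Real.exp (R ^ 2 / 2) * R)
    norm_num at a4
    refine a4.congr fun n => ?_
    ring_nf
  rw [tendsto_iff_norm_sub_tendsto_zero]
  refine squeeze_zero' (Eventually.of_forall fun n => norm_nonneg _) ?_ hbd
  have hsmall : ∀ᶠ n in atTop, 2 * R * h n ≤ 1 := by
    have := hh.const_mul (2 * R)
    rw [mul_zero] at this
    filter_upwards [this.eventually (gt_mem_nhds zero_lt_one)] with n hn using hn.le
  filter_upwards [ev_facts c hc0 hc2 q hq d, hsmall] with n ⟨a, b, e⟩ hsm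
  have hn : (0 : ℝ) < n := by exact_mod_cast (by omega : 0 < n)
  have hev : Even (q n + (2 * n - q n - d)) := by
    have : q n + (2 * n - q n - d) = 2 * n - d := by omega
    rw [this, Nat.even_iff]; rw [Nat.even_iff] at hd; omega
  refine char_bound (pp (q n) (2 * n - q n - d) (2 * n + 1)) (q n) ((2 * n - q n - d : ℕ) : ℝ)
    (2 * n + 1) (pp_nonneg _ _ _) (fun b hb => pp_zero _ _ _ _ (by omega))
    (pp_sum _ _ _ hev (by omega)) (fun b => pp_rel _ _ _ b) (by positivity) (by positivity) ?_ ?_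
    (h n) R ?_ (abs_nonneg _) hsm (L n) (μ n) (κ n) rfl rfl rfl θ le_rfl
  · exact_mod_cast (by omega : 4 ≤ q n + (2 * n - q n - d))
  · intro b hb
    by_contra hlt
    exact hb (pp_zero _ _ _ _ (by exact_mod_cast not_le.1 hlt))
  · have := Real.sqrt_pos.2 hn
    simp only [h]; positivity

noncomputable def TH (t : ℝ) (q : ℕ → ℕ) (n : ℕ) : ℝ :=
  (q n : ℝ) * (2 * (n : ℝ) - (q n : ℝ)) / (2 * (n : ℝ))
    + t * ((q n : ℝ) * (2 * (n : ℝ) - (q n : ℝ)) / (2 * (n : ℝ) ^ ((3 : ℝ) / 2)))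

theorem th_lim (c : ℝ) (hc0 : 0 < c) (hc2 : c < 2) (q : ℕ → ℕ)
    (hq : Tendsto (fun n => (q n : ℝ) / n) atTop (𝓝 c)) (d : ℕ) (t : ℝ) :
    Tendsto (fun n : ℕ => 1 / (c * (2 - c) / 2) * (1 / Real.sqrt n) *
      (TH t q n - mu (q n) (2 * n - q n - d)) - t) atTop (𝓝 0) := by
  set s := c * (2 - c) / 2 with hs
  have hs0 : 0 < s := by rw [hs]; have : 0 < 2 - c := by linarith
                         positivity
  have hL := L1_lim c hc0 hc2 q hq d
  have a1 : Tendsto (fun n : ℕ => (q n : ℝ) / n * (-2 + (q n : ℝ) / n * (d + 1)) /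
      (2 * (((q n : ℝ) + (2 * n - q n - d : ℕ) - 1) / n)) * (1 / Real.sqrt n)) atTop (𝓝 0) := by
    have := ((hq.mul (((hq.mul_const ((d : ℝ) + 1))).const_add (-2))).div (hL.const_mul 2)
      (by norm_num)).mul inv_sqrt_lim
    rw [mul_zero] at this
    exact this
  have a2 : Tendsto (fun n : ℕ => t * ((q n : ℝ) / n * (2 - (q n : ℝ) / n) / 2)) atTop
      (𝓝 (t * s)) := ((hq.mul (hq.const_sub 2)).div_const 2).const_mul t
  have a3 := ((a1.add a2).const_mul (1 / s)).sub_const t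
  rw [zero_add, show 1 / s * (t * s) - t = 0 by field_simp; ring] at a3
  refine a3.congr' ?_
  filter_upwards [ev_facts c hc0 hc2 q hq d] with n ⟨a, b, e⟩
  have hn : (0 : ℝ) < n := by exact_mod_cast (by omega : 0 < n)
  have hm : ((2 * n - q n - d : ℕ) : ℝ) = 2 * n - q n - d := by
    rw [Nat.sub_sub, Nat.cast_sub a]; push_cast; ring
  have hpow : (n : ℝ) ^ ((3 : ℝ) / 2) = n * Real.sqrt n := by
    rw [show (3 : ℝ) / 2 = 1 + 1 / 2 by norm_num, Real.rpow_add hn, Real.rpow_one,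
      Real.sqrt_eq_rpow]
  have hl : (0 : ℝ) < 2 * n - d - 1 := by
    have : ((d : ℝ) + 4) ≤ n := by exact_mod_cast e
    linarith
  unfold TH mu
  rw [hpow, hm]
  rw [show (q n : ℝ) + (2 * n - q n - d) - 1 = 2 * n - d - 1 by ring]
  have hsq : 0 < Real.sqrt n := Real.sqrt_pos.2 hn
  have e2 : (n : ℝ) = Real.sqrt n * Real.sqrt n := (Real.mul_self_sqrt hn.le).symm
  generalize Real.sqrt n = y at *
  rw [e2] at hl ⊢
  congr 1
  rw [mul_assoc]
  congr 1
  generalize hl2 : 2 * (y * y) - (d : ℝ) - 1 = l at *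
  have : (d : ℝ) = 2 * (y * y) - 1 - l := by linarith
  rw [this]
  field_simp
  ring

theorem clt (c : ℝ) (hc0 : 0 < c) (hc2 : c < 2) (q : ℕ → ℕ)
    (hq : Tendsto (fun n => (q n : ℝ) / n) atTop (𝓝 c)) (d : ℕ) (hd : Even d) (t : ℝ) :
    Tendsto (fun n : ℕ => ∑ b ∈ Finset.range (2 * n + 1),
      if (b : ℝ) ≤ TH t q n then pp (q n) (2 * n - q n - d) (2 * n + 1) b else 0) atTop
      (𝓝 ((Real.sqrt (2 * Real.pi))⁻¹ * ∫ x in Set.Iic t, Real.exp (-x ^ 2 / 2))) := by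
  have hs0 : 0 < c * (2 - c) / 2 := by
    have : 0 < 2 - c := by linarith
    positivity
  have := levy_aux2 (fun n => 2 * n + 1) (fun n => pp (q n) (2 * n - q n - d) (2 * n + 1))
    (fun n b => 1 / (c * (2 - c) / 2) * (1 / Real.sqrt n) * (b - mu (q n) (2 * n - q n - d)))
    _ (th_lim c hc0 hc2 q hq d t) (fun n => pp_nonneg _ _ _) ?_
    (char_lim c hc0 hc2 q hq d hd) t
  · refine this.congr' ?_
    filter_upwards [eventually_gt_atTop 0] with n hn
    have hn : (0 : ℝ) < n := by exact_mod_cast hn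
    have hsq := Real.sqrt_pos.2 hn
    refine Finset.sum_congr rfl fun b _ => ?_
    congr 1
    rw [add_sub_cancel, mul_le_mul_iff_right₀ (by positivity), sub_le_sub_iff_right]
  · filter_upwards [ev_facts c hc0 hc2 q hq d] with n ⟨a, b, e⟩
    refine pp_sum _ _ _ ?_ (by omega)
    have : q n + (2 * n - q n - d) = 2 * n - d := by omega
    rw [this, Nat.even_iff]; rw [Nat.even_iff] at hd; omega
end

theorem rho_exp (c : ℝ) (hc0 : 0 < c) (hc2 : c < 2) (q : ℕ → ℕ)
    (hq : Tendsto (fun n => (q n : ℝ) / n) atTop (𝓝 c)) (d : ℕ) (hd : Even d) :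
    Tendsto (fun n : ℕ => ∑ b ∈ Finset.range (2 * n + 1),
      pp (q n) (2 * n - q n - d) (2 * n + 1) b * |rho (q n) b - Real.exp (-(c / 2))|) atTop
      (𝓝 0) := by
  set r := Real.exp (-(c / 2)) with hr
  have hr1 : r ≤ 1 := by rw [hr, Real.exp_le_one_iff]; linarith
  have hr0 : 0 < r := Real.exp_pos _
  have hy : Tendsto (fun n => mu (q n) (2 * n - q n - d) / q n) atTop (𝓝 (1 - c / 2)) := by
    have := (mu_lim c hc0 hc2 q hq d).div hq hc0.ne'
    rw [show c * (2 - c) / 2 / c = 1 - c / 2 by field_simp] at this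
    refine this.congr' ?_
    filter_upwards [eventually_gt_atTop 0] with n hn
    have hn : (n : ℝ) ≠ 0 := by exact_mod_cast hn.ne'
    simp only [Pi.div_apply]
    exact div_div_div_cancel_right₀ hn _ _
  have hqn : Tendsto (fun n : ℕ => (n : ℝ) / (q n : ℝ) ^ 2) atTop (𝓝 0) := by
    have h1 := ((hq.pow 2).inv₀ (by positivity)).mul (tendsto_one_div_atTop_nhds_zero_nat (𝕜 := ℝ))
    rw [mul_zero] at h1
    refine h1.congr' ?_
    filter_upwards [eventually_gt_atTop 0] with n hn
    have hn : (n : ℝ) ≠ 0 := by exact_mod_cast hn.ne'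
    field_simp
  have hqtop : Tendsto q atTop atTop := by
    have : Tendsto (fun n => (q n : ℝ) / n * n) atTop atTop :=
      hq.pos_mul_atTop hc0 tendsto_natCast_atTop_atTop
    refine tendsto_natCast_atTop_iff.1 (this.congr' ?_)
    filter_upwards [eventually_gt_atTop 0] with n hn
    have hn : (n : ℝ) ≠ 0 := by exact_mod_cast hn.ne'
    field_simp
  rw [Metric.tendsto_atTop']
  intro ε hε
  obtain ⟨δ, hδ, Q, hQ⟩ := rho_lim (1 - c / 2) (by linarith) (ε / 2) (by positivity)
  rw [sub_sub_cancel] at hQ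
  have hz := hqn.const_mul (32 / δ ^ 2)
  rw [mul_zero] at hz
  have hev : ∀ᶠ n : ℕ in atTop, dist (∑ b ∈ Finset.range (2 * n + 1),
      pp (q n) (2 * n - q n - d) (2 * n + 1) b * |rho (q n) b - r|) 0 < ε := by
    filter_upwards [ev_facts c hc0 hc2 q hq d, hqtop.eventually_ge_atTop Q,
      hz.eventually (gt_mem_nhds (half_pos hε)),
      hy.eventually (Metric.ball_mem_nhds _ (half_pos hδ))] with n ⟨a, b0, e⟩ hnQ hsm hmu
    set m := 2 * n - q n - d with hm
    set μ := mu (q n) m with hμ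
    have hLe : q n + m = 2 * n - d := by omega
    have hev : Even (q n + m) := by
      rw [hLe, Nat.even_iff]; rw [Nat.even_iff] at hd; omega
    have h1 := pp_sum (q n) m (2 * n + 1) hev (by omega)
    have hv : ∑ b ∈ Finset.range (2 * n + 1), pp (q n) m (2 * n + 1) b * (b - μ) ^ 2 ≤
        (q n : ℝ) + m :=
      var_bound (pp (q n) m (2 * n + 1)) (q n) m (2 * n + 1)
        (fun b hb => pp_zero _ _ _ _ (by omega)) h1 (fun b => pp_rel _ _ _ b)
        (by positivity) (by positivity) (by exact_mod_cast (by omega : 4 ≤ q n + m))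
    have hL2 : (q n : ℝ) + m ≤ 2 * n := by exact_mod_cast (by omega : q n + m ≤ 2 * n)
    have hq0 : (0 : ℝ) < q n := by exact_mod_cast b0
    have hmu' : |μ / q n - (1 - c / 2)| < δ / 2 := by
      rwa [Real.dist_eq] at hmu
    have hpt : ∀ b : ℕ, |rho (q n) b - r| ≤ ε / 2 + 16 / (δ * q n) ^ 2 * ((b : ℝ) - μ) ^ 2 := by
      intro b
      rcases lt_or_ge |(b : ℝ) / q n - (1 - c / 2)| δ with hb | hb
      · have := hQ (q n) hnQ b hb
        have h2 : 0 ≤ 16 / (δ * q n) ^ 2 * ((b : ℝ) - μ) ^ 2 := by positivity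
        linarith
      · have h4 : |rho (q n) b - r| ≤ 4 := by
          refine (abs_sub _ _).trans ?_
          rw [abs_of_pos hr0]
          linarith [rho_abs (q n) b]
        have h5 : δ / 2 ≤ |((b : ℝ) - μ) / q n| := by
          have : ((b : ℝ) - μ) / q n = ((b : ℝ) / q n - (1 - c / 2)) - (μ / q n - (1 - c / 2)) := by
            ring
          rw [this]
          have := abs_sub_abs_le_abs_sub ((b : ℝ) / q n - (1 - c / 2)) (μ / q n - (1 - c / 2))
          linarith
        have h6 : (δ / 2) ^ 2 ≤ (((b : ℝ) - μ) / q n) ^ 2 := by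
          rw [← sq_abs (((b : ℝ) - μ) / q n)]
          gcongr
        have h7 : 16 / (δ * q n) ^ 2 * ((b : ℝ) - μ) ^ 2 =
            16 / δ ^ 2 * (((b : ℝ) - μ) / q n) ^ 2 := by
          field_simp
        have h8 : 4 = 16 / δ ^ 2 * (δ / 2) ^ 2 := by field_simp; norm_num
        have h9 : 16 / δ ^ 2 * (δ / 2) ^ 2 ≤ 16 / δ ^ 2 * (((b : ℝ) - μ) / q n) ^ 2 := by gcongr
        rw [h7]
        linarith
    rw [Real.dist_eq, sub_zero, abs_of_nonneg (Finset.sum_nonneg fun b _ =>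
      mul_nonneg (pp_nonneg _ _ _ _) (abs_nonneg _))]
    calc _ ≤ ∑ b ∈ Finset.range (2 * n + 1), pp (q n) m (2 * n + 1) b *
          (ε / 2 + 16 / (δ * q n) ^ 2 * ((b : ℝ) - μ) ^ 2) :=
          Finset.sum_le_sum fun b _ => mul_le_mul_of_nonneg_left (hpt b) (pp_nonneg _ _ _ _)
      _ = ε / 2 * ∑ b ∈ Finset.range (2 * n + 1), pp (q n) m (2 * n + 1) b + 16 / (δ * q n) ^ 2 *
          ∑ b ∈ Finset.range (2 * n + 1), pp (q n) m (2 * n + 1) b * (b - μ) ^ 2 := by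
          rw [Finset.mul_sum, Finset.mul_sum, ← Finset.sum_add_distrib]
          exact Finset.sum_congr rfl fun b _ => by ring
      _ ≤ ε / 2 * 1 + 16 / (δ * q n) ^ 2 * (2 * n) := by
          rw [h1]
          gcongr
          exact hv.trans hL2
      _ = ε / 2 + 32 / δ ^ 2 * (n / (q n : ℝ) ^ 2) := by
          field_simp; ring
      _ < ε := by linarith
  obtain ⟨n0, hn0⟩ := eventually_atTop.1 hev
  exact ⟨n0, fun n hn => hn0 n hn.le⟩

theorem main_an (c : ℝ) (hc0 : 0 < c) (hc2 : c < 2) (q : ℕ → ℕ)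
    (hq : Tendsto (fun n => (q n : ℝ) / n) atTop (𝓝 c)) (d : ℕ) (hd : Even d) (t : ℝ) :
    (∀ᶠ n : ℕ in atTop, 0 < ∑ b ∈ Finset.range (2 * n + 1),
      wt (q n) (2 * n - q n - d) b * rho (q n) b) ∧
    Tendsto (fun n : ℕ => (∑ b ∈ Finset.range (2 * n + 1),
      if (b : ℝ) ≤ TH t q n then wt (q n) (2 * n - q n - d) b * rho (q n) b else 0) /
      ∑ b ∈ Finset.range (2 * n + 1), wt (q n) (2 * n - q n - d) b * rho (q n) b) atTop
      (𝓝 ((Real.sqrt (2 * Real.pi))⁻¹ * ∫ x in Set.Iic t, Real.exp (-x ^ 2 / 2))) := by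
  have hE := rho_exp c hc0 hc2 q hq d hd
  have hC := clt c hc0 hc2 q hq d hd t
  set r := Real.exp (-(c / 2)) with hr
  set Φ := (Real.sqrt (2 * Real.pi))⁻¹ * ∫ x in Set.Iic t, Real.exp (-x ^ 2 / 2) with hΦ
  have hr0 : 0 < r := Real.exp_pos _
  have hone : ∀ᶠ n : ℕ in atTop, ∑ b ∈ Finset.range (2 * n + 1),
      pp (q n) (2 * n - q n - d) (2 * n + 1) b = 1 ∧
      0 < WS (q n) (2 * n - q n - d) (2 * n + 1) := by
    filter_upwards [ev_facts c hc0 hc2 q hq d] with n ⟨a, b, e⟩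
    have : Even (q n + (2 * n - q n - d)) := by
      have : q n + (2 * n - q n - d) = 2 * n - d := by omega
      rw [this, Nat.even_iff]; rw [Nat.even_iff] at hd; omega
    exact ⟨pp_sum _ _ _ this (by omega), WS_pos _ _ _ this (by omega)⟩
  have hden : Tendsto (fun n : ℕ => ∑ b ∈ Finset.range (2 * n + 1),
      pp (q n) (2 * n - q n - d) (2 * n + 1) b * rho (q n) b) atTop (𝓝 r) := by
    rw [tendsto_iff_norm_sub_tendsto_zero]
    refine squeeze_zero' (Eventually.of_forall fun n => norm_nonneg _) ?_ hE
    filter_upwards [hone] with n hn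
    have : r = ∑ b ∈ Finset.range (2 * n + 1),
      pp (q n) (2 * n - q n - d) (2 * n + 1) b * r := by rw [← Finset.sum_mul, hn.1, one_mul]
    nth_rw 1 [this]
    rw [← Finset.sum_sub_distrib]
    refine (norm_sum_le _ _).trans (Finset.sum_le_sum fun b _ => ?_)
    rw [← mul_sub, norm_mul, Real.norm_of_nonneg (pp_nonneg _ _ _ _), Real.norm_eq_abs]
  have hnum : Tendsto (fun n : ℕ => ∑ b ∈ Finset.range (2 * n + 1), if (b : ℝ) ≤ TH t q n then
      pp (q n) (2 * n - q n - d) (2 * n + 1) b * rho (q n) b else 0) atTop (𝓝 (Φ * r)) := by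
    have hC2 := hC.mul_const r
    have hdiff : Tendsto (fun n : ℕ => (∑ b ∈ Finset.range (2 * n + 1), if (b : ℝ) ≤ TH t q n then
      pp (q n) (2 * n - q n - d) (2 * n + 1) b * rho (q n) b else 0) -
      (∑ b ∈ Finset.range (2 * n + 1), if (b : ℝ) ≤ TH t q n then
      pp (q n) (2 * n - q n - d) (2 * n + 1) b else 0) * r) atTop (𝓝 0) := by
      refine squeeze_zero_norm (fun n => ?_) hE
      rw [Finset.sum_mul, ← Finset.sum_sub_distrib]
      refine (norm_sum_le _ _).trans (Finset.sum_le_sum fun b _ => ?_)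
      split_ifs
      · rw [← mul_sub, norm_mul, Real.norm_of_nonneg (pp_nonneg _ _ _ _), Real.norm_eq_abs]
      · simp only [zero_mul, sub_zero, norm_zero]
        exact mul_nonneg (pp_nonneg _ _ _ _) (abs_nonneg _)
    have := hdiff.add hC2
    rw [zero_add] at this
    exact this.congr fun n => by ring
  have hp : ∀ n b, wt (q n) (2 * n - q n - d) b * rho (q n) b /
      WS (q n) (2 * n - q n - d) (2 * n + 1) =
      pp (q n) (2 * n - q n - d) (2 * n + 1) b * rho (q n) b := fun n b => by
    unfold pp; ring
  constructor
  · filter_upwards [hone, hden.eventually (lt_mem_nhds hr0)] with n hn hpos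
    have : ∑ b ∈ Finset.range (2 * n + 1), wt (q n) (2 * n - q n - d) b * rho (q n) b =
      WS (q n) (2 * n - q n - d) (2 * n + 1) * ∑ b ∈ Finset.range (2 * n + 1),
      pp (q n) (2 * n - q n - d) (2 * n + 1) b * rho (q n) b := by
      rw [Finset.mul_sum]
      refine Finset.sum_congr rfl fun b _ => ?_
      rw [← hp]
      exact (mul_div_cancel₀ _ hn.2.ne').symm
    rw [this]
    exact mul_pos hn.2 hpos
  · have := hnum.div hden hr0.ne'
    rw [mul_div_cancel_right₀ _ hr0.ne'] at this
    refine this.congr' ?_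
    filter_upwards [hone] with n hn
    simp only [Pi.div_apply, ← hp]
    rw [← Finset.sum_div, ← div_div_div_cancel_right₀ hn.2.ne' (∑ b ∈ Finset.range (2 * n + 1),
      if (b : ℝ) ≤ TH t q n then wt (q n) (2 * n - q n - d) b * rho (q n) b else 0)]
    congr 1
    rw [Finset.sum_div]
    refine Finset.sum_congr rfl fun b _ => ?_
    split_ifs <;> simp

theorem mix (x1 x2 y1 y2 α β : ℕ → ℝ) (P : ℝ) (h1 : Tendsto (fun n => x1 n / y1 n) atTop (𝓝 P))
    (h2 : Tendsto (fun n => x2 n / y2 n) atTop (𝓝 P)) (p1 : ∀ᶠ n in atTop, 0 < y1 n)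
    (p2 : ∀ᶠ n in atTop, 0 < y2 n) (hα : ∀ᶠ n in atTop, 0 < α n) (hβ : ∀ n, 0 ≤ β n) :
    Tendsto (fun n => (α n * x1 n + β n * x2 n) / (α n * y1 n + β n * y2 n)) atTop (𝓝 P) := by
  have g1 := h1.sub_const P
  have g2 := h2.sub_const P
  rw [sub_self] at g1 g2
  have g := g1.abs.add g2.abs
  rw [abs_zero, add_zero] at g
  rw [tendsto_iff_norm_sub_tendsto_zero]
  refine squeeze_zero' (Eventually.of_forall fun n => norm_nonneg _) ?_ g
  filter_upwards [p1, p2, hα] with n a1 a2 a3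
  have hb := hβ n
  have hA : 0 < α n * y1 n := mul_pos a3 a1
  have hB : 0 ≤ β n * y2 n := mul_nonneg hb a2.le
  set u := x1 n / y1 n - P with hu
  set v := x2 n / y2 n - P with hv
  have e1 : x1 n = (u + P) * y1 n := by rw [hu]; field_simp; ring
  have e2 : x2 n = (v + P) * y2 n := by rw [hv]; field_simp; ring
  have e3 : (α n * x1 n + β n * x2 n) / (α n * y1 n + β n * y2 n) - P =
      (α n * y1 n * u + β n * y2 n * v) / (α n * y1 n + β n * y2 n) := by
    have : α n * y1 n + β n * y2 n ≠ 0 := by linarith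
    rw [e1, e2]; field_simp; ring
  rw [e3, Real.norm_eq_abs, abs_div, abs_of_pos (by linarith : 0 < α n * y1 n + β n * y2 n),
    div_le_iff₀ (by linarith)]
  refine (abs_add_le _ _).trans ?_
  rw [abs_mul (α n * y1 n), abs_mul (β n * y2 n), abs_of_pos hA, abs_of_nonneg hB]
  nlinarith [abs_nonneg u, abs_nonneg v, mul_nonneg hA.le (abs_nonneg v),
    mul_nonneg hB (abs_nonneg u)]

theorem ew_succ (q b : ℕ) : ew (q + 1) (b + 1) = (q + 1) * ew q b := by
  unfold ew
  by_cases h : b ≤ q ∧ Even (q - b)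
  · rw [if_pos h, if_pos (by simpa using h), Nat.factorial_succ, Nat.add_sub_add_right]
    push_cast; ring
  · rw [if_neg h, if_neg (by simpa using h)]; simp

theorem ew_zero_succ (b : ℕ) : ew 0 (b + 1) = 0 := ew_of_lt (by omega)

theorem wt_comm (q m b : ℕ) : wt q m b = wt m q b := by unfold wt; ring

theorem wt_rec_succ (q m b : ℕ) :
    wt (q + 1) m (b + 1) = q * wt (q - 1) m (b + 1) + m * wt q (m - 1) b := by
  rcases m with _ | m
  · unfold wt; simp [ew_zero_succ]
  rw [Nat.add_sub_cancel]
  have hb : (b ! : ℝ) ≠ 0 := by positivity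
  have key : ((q : ℝ) - b) * ew q b = q * ew (q - 1) (b + 1) := by
    rw [← ew_rel1]
    rcases q with _ | q
    · simp [ew_zero_succ]
    · rw [ew_succ]; simp
  unfold wt
  rw [ew_succ, ew_succ, Nat.factorial_succ]
  push_cast
  field_simp
  linear_combination ew m b * key

theorem wt_rec_zero (q m : ℕ) : wt (q + 1) m 0 = q * wt (q - 1) m 0 := by
  rcases q with _ | q
  · unfold wt; have := ew_odd 0 1 (by simp); simp at this; simp [this]
  · have := ew_rel2 q 0
    have h2 : ew (q + 2) 0 = (q + 1) * ew q 0 := by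
      have h : (q : ℝ) + 2 ≠ 0 := by positivity
      refine mul_right_cancel₀ h ?_
      push_cast at this
      linear_combination this
    unfold wt
    rw [show q + 1 + 1 = q + 2 by ring, h2, Nat.add_sub_cancel]; push_cast; ring

theorem wt_zero_zero (b : ℕ) : wt 0 0 b = if b = 0 then 1 else 0 := by
  rcases b with _ | b
  · unfold wt; have := ew_add 0 0 (by simp); simp at this; simp [this]
  · unfold wt; simp [ew_zero_succ]

theorem wt_rec0 (m b : ℕ) : wt 0 (m + 1) b = m * wt 0 (m - 1) b := by
  rcases b with _ | b
  · rw [wt_comm, wt_rec_zero, wt_comm]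
  · unfold wt; simp [ew_zero_succ]

section comb
variable {α : Type*} [Fintype α] [DecidableEq α]

def Mt (S : Finset α) : Finset (Equiv.Perm α) :=
  Finset.univ.filter fun f => (∀ i, f (f i) = i) ∧ ∀ i, f i ≠ i ↔ i ∈ S

def br (I : Finset α) (f : Equiv.Perm α) : ℕ := (Finset.univ.filter fun i => i ∈ I ∧ f i ∉ I).card

theorem mem_Mt {S : Finset α} {f : Equiv.Perm α} :
    f ∈ Mt S ↔ (∀ i, f (f i) = i) ∧ ∀ i, f i ≠ i ↔ i ∈ S := by simp [Mt]

theorem ms_apply (g : Equiv.Perm α) (u v x : α) :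
    (g * Equiv.swap u v) x = if x = u then g v else if x = v then g u else g x := by
  rw [Equiv.Perm.mul_apply, Equiv.swap_apply_def]; split_ifs <;> rfl

theorem rem (S : Finset α) (u v : α) (hu : u ∈ S) (hv : v ∈ S) (huv : u ≠ v)
    (P P' : Equiv.Perm α → Prop) [DecidablePred P] [DecidablePred P']
    (h : ∀ g, g u = u → g v = v → (P (g * Equiv.swap u v) ↔ P' g)) :
    ((Mt S).filter fun f => f u = v ∧ P f).card = ((Mt (S \ {u, v})).filter P').card := by
  refine Finset.card_bij' (fun f _ => f * Equiv.swap u v) (fun g _ => g * Equiv.swap u v) ?_ ?_ ?_ ?_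
  · intro f hf
    simp only [Finset.mem_filter, mem_Mt] at hf ⊢
    obtain ⟨⟨h1, h2⟩, h3, h4⟩ := hf
    have h5 : f v = u := by rw [← h3, h1]
    have e1 : (f * Equiv.swap u v) u = u := by rw [ms_apply]; simp [h5]
    have e2 : (f * Equiv.swap u v) v = v := by rw [ms_apply]; simp [h3, huv.symm]
    refine ⟨⟨?_, ?_⟩, ?_⟩
    · intro i
      by_cases hiu : i = u
      · rw [hiu, e1, e1]
      by_cases hiv : i = v
      · rw [hiv, e2, e2]
      have e3 : (f * Equiv.swap u v) i = f i := by rw [ms_apply]; simp [hiu, hiv]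
      have : f i ≠ u := fun hh => hiv (by rw [← h1 i, hh, h3])
      have : f i ≠ v := fun hh => hiu (by rw [← h1 i, hh, h5])
      rw [e3, ms_apply]; simp [*]
    · intro i
      by_cases hiu : i = u
      · rw [hiu, e1]; simp
      by_cases hiv : i = v
      · rw [hiv, e2]; simp
      have e3 : (f * Equiv.swap u v) i = f i := by rw [ms_apply]; simp [hiu, hiv]
      rw [e3, h2]; simp [hiu, hiv]
    · rw [← h _ e1 e2, mul_assoc, Equiv.swap_mul_self, mul_one]; exact h4
  · intro g hg
    simp only [Finset.mem_filter, mem_Mt] at hg ⊢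
    obtain ⟨⟨h1, h2⟩, h4⟩ := hg
    have gu : g u = u := by by_contra hh; have := (h2 u).1 hh; simp at this
    have gv : g v = v := by by_contra hh; have := (h2 v).1 hh; simp at this
    have e1 : (g * Equiv.swap u v) u = v := by rw [ms_apply]; simp [gv]
    have e2 : (g * Equiv.swap u v) v = u := by rw [ms_apply]; simp [gu, huv.symm]
    refine ⟨⟨?_, ?_⟩, e1, (h g gu gv).2 h4⟩
    · intro i
      by_cases hiu : i = u
      · rw [hiu, e1, e2]
      by_cases hiv : i = v
      · rw [hiv, e2, e1]
      have e3 : (g * Equiv.swap u v) i = g i := by rw [ms_apply]; simp [hiu, hiv]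
      have : g i ≠ u := fun hh => hiu (by rw [← h1 i, hh, gu])
      have : g i ≠ v := fun hh => hiv (by rw [← h1 i, hh, gv])
      rw [e3, ms_apply]; simp [*]
    · intro i
      by_cases hiu : i = u
      · rw [hiu, e1]; simp [hu, huv.symm]
      by_cases hiv : i = v
      · rw [hiv, e2]; simp [hv, huv]
      have e3 : (g * Equiv.swap u v) i = g i := by rw [ms_apply]; simp [hiu, hiv]
      rw [e3, h2]; simp [hiu, hiv]
  · intro f _; simp [mul_assoc]
  · intro f _; simp [mul_assoc]

theorem br_same (I : Finset α) (u v : α) (h : u ∈ I ↔ v ∈ I) (g : Equiv.Perm α)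
    (gu : g u = u) (gv : g v = v) : br I (g * Equiv.swap u v) = br I g := by
  unfold br
  congr 1
  ext i
  simp only [Finset.mem_filter, Finset.mem_univ, true_and, ms_apply]
  split_ifs with h1 h2
  · subst h1; rw [gu, gv]; tauto
  · subst h2; rw [gu, gv]; tauto
  · rfl

theorem br_diff (I : Finset α) (u v : α) (hu : u ∈ I) (hv : v ∉ I) (g : Equiv.Perm α)
    (gu : g u = u) (gv : g v = v) : br I (g * Equiv.swap u v) = br I g + 1 := by
  unfold br
  rw [← Finset.card_insert_of_notMem (a := u) (by simp [gu])]
  congr 1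
  ext i
  simp only [Finset.mem_filter, Finset.mem_univ, true_and, ms_apply, Finset.mem_insert]
  split_ifs with h1 h2
  · subst h1; simp [gv, hu, hv]
  · subst h2; simp [gu, hv, h1]
  · simp [h1]

theorem part (S : Finset α) (u : α) (hu : u ∈ S) (P : Equiv.Perm α → Prop) [DecidablePred P] :
    ((Mt S).filter P).card = ∑ v ∈ S.erase u, ((Mt S).filter fun f => f u = v ∧ P f).card := by
  rw [Finset.card_eq_sum_card_fiberwise (f := fun f => f u) (t := S.erase u)]
  · refine Finset.sum_congr rfl fun v _ => ?_
    congr 1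
    ext f; simp only [Finset.mem_filter]; tauto
  · intro f hf
    simp only [Finset.coe_filter, Set.mem_ofPred_eq, mem_Mt] at hf
    simp only [Finset.coe_erase]
    have h1 := (hf.1.2 u).2 hu
    refine ⟨?_, by simpa using h1⟩
    have := (hf.1.2 (f u)).1 (by rw [hf.1.1]; exact h1.symm)
    simpa using this

theorem count (I : Finset α) : ∀ (s : ℕ) (S : Finset α), S.card = s → ∀ b,
    (((Mt S).filter fun f => br I f = b).card : ℝ) = wt (S ∩ I).card (S \ I).card b := by
  intro s
  induction s using Nat.strong_induction_on with
  | _ s ih =>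
  intro S hS b
  have hlt : ∀ u v, u ∈ S → (S \ {u, v}).card < s := fun u v hu => by
    rw [← hS]; exact Finset.card_lt_card ⟨Finset.sdiff_subset, fun h => by simpa using h hu⟩
  by_cases hI : (S ∩ I).Nonempty
  · obtain ⟨u, hu⟩ := hI
    obtain ⟨huS, huI⟩ := Finset.mem_inter.1 hu
    rw [part S u huS]
    have hsplit : S.erase u = ((S ∩ I).erase u) ∪ (S \ I) := by
      ext x; simp only [Finset.mem_erase, Finset.mem_union, Finset.mem_inter, Finset.mem_sdiff]
      constructor
      · tauto
      · rintro (h | h)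
        · tauto
        · exact ⟨fun hh => h.2 (hh ▸ huI), h.1⟩
    have hdisj : Disjoint ((S ∩ I).erase u) (S \ I) := by
      rw [Finset.disjoint_left]; intro x; simp; tauto
    rw [hsplit, Finset.sum_union hdisj]
    obtain ⟨k, hk⟩ : ∃ k, (S ∩ I).card = k + 1 :=
      ⟨(S ∩ I).card - 1, by have := Finset.card_pos.2 ⟨u, hu⟩; omega⟩
    have hA : ∀ v ∈ (S ∩ I).erase u,
        (((Mt S).filter fun f => f u = v ∧ br I f = b).card : ℝ) = wt (k - 1) (S \ I).card b := by
      intro v hv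
      simp only [Finset.mem_erase, Finset.mem_inter] at hv
      rw [rem S u v huS hv.2.1 (Ne.symm hv.1) _ (fun f => br I f = b)
        (fun g gu gv => by rw [br_same I u v (by tauto) g gu gv]), ih _ (hlt u v huS) _ rfl]
      congr 1
      · rw [show (S \ {u, v}) ∩ I = (S ∩ I) \ {u, v} by ext x; simp; tauto,
          Finset.card_sdiff_of_subset, hk, Finset.card_pair (Ne.symm hv.1)]
        · omega
        · intro x; simp; rintro (rfl | rfl) <;> tauto
      · congr 1
        ext x; simp only [Finset.mem_sdiff, Finset.mem_insert, Finset.mem_singleton]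
        constructor
        · tauto
        · rintro ⟨h1, h2⟩; exact ⟨⟨h1, by rintro (rfl | rfl) <;> tauto⟩, h2⟩
    have hB : ∀ v ∈ S \ I,
        (((Mt S).filter fun f => f u = v ∧ br I f = b).card : ℝ) =
          if b = 0 then 0 else wt k ((S \ I).card - 1) (b - 1) := by
      intro v hv
      simp only [Finset.mem_sdiff] at hv
      have huv : u ≠ v := by rintro rfl; exact hv.2 huI
      rw [rem S u v huS hv.1 huv _ (fun f => br I f + 1 = b)
        (fun g gu gv => by rw [br_diff I u v huI hv.2 g gu gv])]
      rcases b with _ | b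
      · simp
      · simp only [Nat.add_right_cancel_iff]
        rw [ih _ (hlt u v huS) _ rfl, if_neg (by omega), Nat.add_sub_cancel]
        congr 1
        · rw [show (S \ {u, v}) ∩ I = (S ∩ I).erase u by
              ext x
              simp only [Finset.mem_sdiff, Finset.mem_insert, Finset.mem_singleton,
                Finset.mem_inter, Finset.mem_erase]
              constructor
              · tauto
              · rintro ⟨h1, h2, h3⟩
                exact ⟨⟨h2, by rintro (rfl | rfl) <;> tauto⟩, h3⟩,
            Finset.card_erase_of_mem hu, hk]; omega
        · rw [show (S \ {u, v}) \ I = (S \ I).erase v by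
              ext x
              simp only [Finset.mem_sdiff, Finset.mem_insert, Finset.mem_singleton,
                Finset.mem_erase]
              constructor
              · tauto
              · rintro ⟨h1, h2, h3⟩
                exact ⟨⟨h2, by rintro (rfl | rfl) <;> tauto⟩, h3⟩,
            Finset.card_erase_of_mem (by simp [hv])]
    push_cast
    rw [Finset.sum_congr rfl hA, Finset.sum_congr rfl hB, Finset.sum_const, Finset.sum_const,
      Finset.card_erase_of_mem hu, hk, Nat.add_sub_cancel, nsmul_eq_mul, nsmul_eq_mul]
    rcases b with _ | b
    · rw [wt_rec_zero]; simp
    · rw [wt_rec_succ]; simp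
  · rw [Finset.not_nonempty_iff_eq_empty] at hI
    have hd : S \ I = S := by
      rw [Finset.sdiff_eq_self_iff_disjoint, Finset.disjoint_iff_inter_eq_empty, hI]
    rw [hI, hd, Finset.card_empty]
    rcases S.eq_empty_or_nonempty with rfl | ⟨u, hu⟩
    · rw [Finset.card_empty, wt_zero_zero]
      have hM : Mt (∅ : Finset α) = {1} := by
        ext f; rw [mem_Mt, Finset.mem_singleton]
        constructor
        · rintro ⟨_, h⟩; ext i; simpa using h i
        · rintro rfl; simp
      have hb1 : br I (1 : Equiv.Perm α) = 0 := by unfold br; simp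
      rw [hM, Finset.filter_singleton, hb1]
      by_cases hb : b = 0
      · simp [hb]
      · simp [hb, Ne.symm hb]
    · rw [part S u hu]
      have hn : ∀ x ∈ S, x ∉ I := fun x hx hx2 => by
        have : x ∈ S ∩ I := Finset.mem_inter.2 ⟨hx, hx2⟩
        rw [hI] at this; simp at this
      obtain ⟨k, hk⟩ : ∃ k, S.card = k + 1 :=
        ⟨S.card - 1, by have := Finset.card_pos.2 ⟨u, hu⟩; omega⟩
      have hA : ∀ v ∈ S.erase u,
          (((Mt S).filter fun f => f u = v ∧ br I f = b).card : ℝ) = wt 0 (k - 1) b := by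
        intro v hv
        simp only [Finset.mem_erase] at hv
        rw [rem S u v hu hv.2 (Ne.symm hv.1) _ (fun f => br I f = b)
          (fun g gu gv => by
            rw [br_same I u v (by have := hn u hu; have := hn v hv.2; tauto) g gu gv]),
          ih _ (hlt u v hu) _ rfl]
        congr 1
        · rw [Finset.card_eq_zero, ← Finset.subset_empty, ← hI]
          exact Finset.inter_subset_inter_right Finset.sdiff_subset
        · rw [show (S \ {u, v}) \ I = S \ {u, v} by
            ext x; simp only [Finset.mem_sdiff]
            constructor
            · tauto
            · intro h; exact ⟨h, hn x h.1⟩, Finset.card_sdiff_of_subset, hk,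
              Finset.card_pair (Ne.symm hv.1)]
          · omega
          · intro x; simp; rintro (rfl | rfl) <;> tauto
      push_cast
      rw [Finset.sum_congr rfl hA, Finset.sum_const, Finset.card_erase_of_mem hu, hk,
        Nat.add_sub_cancel, nsmul_eq_mul, wt_rec0]

end comb

section comb2
variable {α : Type*} [Fintype α] [DecidableEq α]

def GG (I : Finset α) (v : ℕ → α) (b p : ℕ) (f : Equiv.Perm α) : Prop :=
  br I f = b ∧ ∀ i ∈ Finset.range (p - 1), f (v i) ≠ v (i + 1)

instance (I : Finset α) (v : ℕ → α) (b p : ℕ) : DecidablePred (GG I v b p) := fun f => by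
  unfold GG; infer_instance

theorem pascal (p k : ℕ) :
    (p + 1 - k).choose (k + 1) = (p - k).choose (k + 1) + (p - k).choose k := by
  rcases le_or_gt k p with h | h
  · rw [show p + 1 - k = (p - k) + 1 by omega, Nat.choose_succ_succ, add_comm]
  · rw [show p + 1 - k = 0 by omega, show p - k = 0 by omega]
    obtain ⟨j, rfl⟩ : ∃ j, k = j + 1 := ⟨k - 1, by omega⟩
    simp

theorem GG_count (I : Finset α) (v : ℕ → α) (b : ℕ) : ∀ (p : ℕ) (S : Finset α) (R : ℕ), p < R →
    (∀ i < p, v i ∈ S ∧ v i ∈ I) → (∀ i < p, ∀ j < p, v i = v j → i = j) →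
    (((Mt S).filter (GG I v b p)).card : ℝ) = ∑ k ∈ Finset.range R,
      (-1) ^ k * ((p - k).choose k : ℝ) * wt ((S ∩ I).card - 2 * k) (S \ I).card b := by
  have base : ∀ p, p ≤ 1 → ∀ (S : Finset α) (R : ℕ), p < R → 
    (((Mt S).filter (GG I v b p)).card : ℝ) = ∑ k ∈ Finset.range R,
      (-1) ^ k * ((p - k).choose k : ℝ) * wt ((S ∩ I).card - 2 * k) (S \ I).card b := by
    intro p hp S R hR
    obtain ⟨R, rfl⟩ : ∃ r, R = r + 1 := ⟨R - 1, by omega⟩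
    rw [Finset.sum_range_succ', Finset.sum_eq_zero]
    · have : (Mt S).filter (GG I v b p) = (Mt S).filter fun f => br I f = b := by
        refine Finset.filter_congr fun f _ => ?_
        unfold GG
        rw [show p - 1 = 0 by omega]; simp
      rw [this, count I _ S rfl b]; simp
    · intro k _
      rw [show p - (k + 1) = 0 by omega]; simp
  intro p
  induction p using Nat.strong_induction_on with
  | _ p ih =>
  intro S R hR hv hinj
  rcases le_or_gt p 1 with hp | hp
  · exact base p hp S R hR
  obtain ⟨p, rfl⟩ : ∃ r, p = r + 2 := ⟨p - 2, by omega⟩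
  obtain ⟨R, rfl⟩ : ∃ r, R = r + 1 := ⟨R - 1, by omega⟩
  have hne : v p ≠ v (p + 1) := fun h => by have := hinj _ (by omega) _ (by omega) h; omega
  have h1 : ((Mt S).filter (GG I v b (p + 1))).card =
      ((Mt S).filter (GG I v b (p + 2))).card +
        ((Mt S).filter fun f => f (v p) = v (p + 1) ∧ GG I v b (p + 1) f).card := by
    rw [← Finset.card_union_of_disjoint]
    · congr 1
      ext f
      simp only [Finset.mem_filter, Finset.mem_union, GG, Nat.add_sub_cancel, 
        show p + 2 - 1 = p + 1 by omega, Finset.range_add_one, Finset.mem_insert,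
        forall_eq_or_imp]
      tauto
    · rw [Finset.disjoint_left]
      intro f hf hf2
      exact (Finset.mem_filter.1 hf).2.2 p (by simp) (Finset.mem_filter.1 hf2).2.1
  have hS' : ∀ i < p, v i ≠ v p ∧ v i ≠ v (p + 1) := fun i hi =>
    ⟨fun h => by have := hinj _ (by omega) _ (by omega) h; omega,
      fun h => by have := hinj _ (by omega) _ (by omega) h; omega⟩
  have h2 := rem S (v p) (v (p + 1)) (hv _ (by omega)).1 (hv _ (by omega)).1 hne
    (GG I v b (p + 1)) (GG I v b p) (by
      intro g gu gv
      unfold GG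
      rw [br_same I _ _ (by simp [(hv p (by omega)).2, (hv (p + 1) (by omega)).2]) g gu gv]
      refine and_congr_right fun _ => ?_
      simp only [Finset.mem_range, Nat.add_sub_cancel]
      constructor
      · intro h i hi
        have := h i (by omega)
        rw [ms_apply, if_neg (hS' i (by omega)).1, if_neg (hS' i (by omega)).2] at this
        exact this
      · intro h i hi
        rw [ms_apply, if_neg (hS' i (by omega)).1, if_neg (hS' i (by omega)).2]
        rcases (by omega : i < p - 1 ∨ i + 1 = p) with h3 | h3
        · exact h i h3
        · rw [h3]
          intro h4
          rw [← gu] at h4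
          exact (hS' i hi).1 (g.injective h4))
  have i1 := ih (p + 1) (by omega) S (R + 1) (by omega) (fun i hi => hv i (by omega))
    (fun i hi j hj => hinj i (by omega) j (by omega))
  have i2 := ih p (by omega) (S \ {v p, v (p + 1)}) R (by omega)
    (fun i hi => ⟨by simpa [hS' i hi] using (hv i (by omega)).1, (hv i (by omega)).2⟩)
    (fun i hi j hj => hinj i (by omega) j (by omega))
  have c1 : ((S \ {v p, v (p + 1)}) ∩ I).card = (S ∩ I).card - 2 := by
    rw [show (S \ {v p, v (p + 1)}) ∩ I = (S ∩ I) \ {v p, v (p + 1)} by ext x; simp; tauto,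
      Finset.card_sdiff_of_subset, Finset.card_pair hne]
    intro x; simp only [Finset.mem_insert, Finset.mem_singleton, Finset.mem_inter]
    rintro (rfl | rfl)
    · exact hv _ (by omega)
    · exact hv _ (by omega)
  have c2 : (S \ {v p, v (p + 1)}) \ I = S \ I := by
    ext x; simp only [Finset.mem_sdiff, Finset.mem_insert, Finset.mem_singleton]
    constructor
    · tauto
    · rintro ⟨h1, h2⟩
      refine ⟨⟨h1, ?_⟩, h2⟩
      rintro (rfl | rfl)
      · exact h2 (hv _ (by omega)).2
      · exact h2 (hv _ (by omega)).2
  rw [c1, c2] at i2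
  have h3 : (((Mt S).filter (GG I v b (p + 2))).card : ℝ) =
      (((Mt S).filter (GG I v b (p + 1))).card : ℝ) -
      (((Mt (S \ {v p, v (p + 1)})).filter (GG I v b p)).card : ℝ) := by
    rw [← h2, h1]; push_cast; ring
  rw [h3, i1, i2, Finset.sum_range_succ', Finset.sum_range_succ' _ R, add_sub_right_comm,
    ← Finset.sum_sub_distrib]
  congr 1
  refine Finset.sum_congr rfl fun k _ => ?_
  rw [show p + 2 - (k + 1) = p + 1 - k by omega, show p + 1 - (k + 1) = p - k by omega, pascal,
    show (S ∩ I).card - 2 - 2 * k = (S ∩ I).card - 2 * (k + 1) by omega]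
  push_cast
  ring

theorem GG_rho (I S : Finset α) (v : ℕ → α) (b q : ℕ) (hq : (S ∩ I).card = q)
    (hv : ∀ i < q, v i ∈ S ∧ v i ∈ I) (hinj : ∀ i < q, ∀ j < q, v i = v j → i = j) :
    (((Mt S).filter (GG I v b q)).card : ℝ) = wt q (S \ I).card b * rho q b := by
  rw [GG_count I v b q S (q + 1) (by omega) hv hinj, hq, sum_rho]

theorem GG_out (I : Finset α) (v : ℕ → α) (b q : ℕ) (hv : ∀ i < q, v i ∈ I) (u w : α)
    (hu : u ∉ I) (hw : w ∉ I) (g : Equiv.Perm α) (gu : g u = u) (gw : g w = w) :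
    GG I v b q (g * Equiv.swap u w) ↔ GG I v b q g := by
  unfold GG
  rw [br_same I u w (by tauto) g gu gw]
  refine and_congr_right fun _ => forall₂_congr fun i hi => ?_
  have h := hv i (by simp at hi; omega)
  rw [ms_apply, if_neg (by rintro rfl; exact hu h), if_neg (by rintro rfl; exact hw h)]

theorem rem1 (I : Finset α) (v : ℕ → α) (b q : ℕ) (hq : I.card = q) (hv : ∀ i < q, v i ∈ I)
    (hinj : ∀ i < q, ∀ j < q, v i = v j → i = j) (u w : α) (hu : u ∉ I) (hw : w ∉ I)
    (huw : u ≠ w) : (((Mt Finset.univ).filter fun f => f u = w ∧ GG I v b q f).card : ℝ) =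
      wt q (Fintype.card α - q - 2) b * rho q b := by
  rw [rem Finset.univ u w (by simp) (by simp) huw _ (GG I v b q)
    (fun g gu gw => GG_out I v b q hv u w hu hw g gu gw)]
  have hs : I ⊆ Finset.univ \ {u, w} := by
    intro x hx; simp only [Finset.mem_sdiff, Finset.mem_insert, Finset.mem_singleton]
    refine ⟨by simp, ?_⟩
    rintro (rfl | rfl) <;> tauto
  rw [GG_rho I _ v b q (by rw [Finset.inter_eq_right.2 hs, hq]) (fun i hi => ⟨hs (hv i hi), hv i hi⟩)
    hinj, Finset.card_sdiff_of_subset hs, Finset.card_sdiff_of_subset (by simp),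
    Finset.card_pair huw, hq, Finset.card_univ, Nat.sub_right_comm]

theorem rem2 (I : Finset α) (v : ℕ → α) (b q : ℕ) (hq : I.card = q) (hv : ∀ i < q, v i ∈ I)
    (hinj : ∀ i < q, ∀ j < q, v i = v j → i = j) (u w : α) (hu : u ∉ I) (hw : w ∉ I)
    (huw : u ≠ w) (u' w' : α) (hu' : u' ∉ I) (hw' : w' ∉ I) (huw' : u' ≠ w') (d1 : u' ≠ u)
    (d2 : u' ≠ w) (d3 : w' ≠ u) (d4 : w' ≠ w) :
    (((Mt Finset.univ).filter fun f => f u = w ∧ f u' = w' ∧ GG I v b q f).card : ℝ) =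
      wt q (Fintype.card α - q - 4) b * rho q b := by
  rw [rem Finset.univ u w (by simp) (by simp) huw _ (fun f => f u' = w' ∧ GG I v b q f)
    (fun g gu gw => by
      rw [GG_out I v b q hv u w hu hw g gu gw, ms_apply, if_neg d1, if_neg d2])]
  rw [rem _ u' w' (by simp [d1, d2]) (by simp [d3, d4]) huw' _ (GG I v b q)
    (fun g gu gw => GG_out I v b q hv u' w' hu' hw' g gu gw)]
  have hs : I ⊆ (Finset.univ \ {u, w}) \ {u', w'} := by
    intro x hx; simp only [Finset.mem_sdiff, Finset.mem_insert, Finset.mem_singleton]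
    refine ⟨⟨by simp, ?_⟩, ?_⟩ <;> rintro (rfl | rfl) <;> tauto
  have hs2 : ({u', w'} : Finset α) ⊆ Finset.univ \ {u, w} := by
    intro x; simp only [Finset.mem_sdiff, Finset.mem_insert, Finset.mem_singleton]
    rintro (rfl | rfl) <;> simp [*]
  rw [GG_rho I _ v b q (by rw [Finset.inter_eq_right.2 hs, hq]) (fun i hi => ⟨hs (hv i hi), hv i hi⟩)
    hinj, Finset.card_sdiff_of_subset hs, Finset.card_sdiff_of_subset hs2,
    Finset.card_sdiff_of_subset (by simp),
    Finset.card_pair huw, Finset.card_pair huw', hq, Finset.card_univ]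
  congr 2; omega

end comb2

def vv (n a : ℕ) (hn : 0 < 2 * n) (i : ℕ) : Fin (2 * n) :=
  if h : a + i < 2 * n then ⟨a + i, h⟩ else ⟨0, hn⟩

def II (n a q : ℕ) : Finset (Fin (2 * n)) :=
  Finset.univ.filter fun i => a ≤ i.val ∧ i.val ≤ a + q - 1

theorem vv_val (n a : ℕ) (hn : 0 < 2 * n) (i : ℕ) (h : a + i < 2 * n) :
    (vv n a hn i).val = a + i := by unfold vv; rw [dif_pos h]

theorem mem_II {n a q : ℕ} {i : Fin (2 * n)} : i ∈ II n a q ↔ a ≤ i.val ∧ i.val ≤ a + q - 1 := by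
  simp [II]

theorem vv_mem (n a q : ℕ) (hn : 0 < 2 * n) (h : a + q ≤ 2 * n) (i : ℕ) (hi : i < q) :
    vv n a hn i ∈ II n a q := by
  rw [mem_II, vv_val n a hn i (by omega)]; omega

theorem vv_inj (n a q : ℕ) (hn : 0 < 2 * n) (h : a + q ≤ 2 * n) (i : ℕ) (hi : i < q) (j : ℕ)
    (hj : j < q) (e : vv n a hn i = vv n a hn j) : i = j := by
  have := congrArg Fin.val e
  rw [vv_val n a hn i (by omega), vv_val n a hn j (by omega)] at this; omega

theorem card_II (n a q : ℕ) (hq : 1 ≤ q) (hn : 0 < 2 * n) (h : a + q ≤ 2 * n) :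
    (II n a q).card = q := by
  have : II n a q = (Finset.range q).image (vv n a hn) := by
    ext i
    rw [Finset.mem_image]
    constructor
    · intro hi
      rw [mem_II] at hi
      refine ⟨i.val - a, by simp; omega, ?_⟩
      apply Fin.ext
      rw [vv_val] <;> omega
    · rintro ⟨j, hj, rfl⟩
      exact vv_mem n a q hn h j (by simpa using hj)
  rw [this, Finset.card_image_of_injOn, Finset.card_range]
  intro i hi j hj e
  exact vv_inj n a q hn h i (by simpa using hi) j (by simpa using hj) e

theorem bridges_br (n a q : ℕ) (f : Equiv.Perm (Fin (2 * n))) :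
    bridges n f a (a + q - 1) = br (II n a q) f := by
  unfold bridges br
  rw [Nat.card_eq_fintype_card, Fintype.card_subtype]
  congr 1
  ext i; simp [mem_II]

theorem bub_iff (n a q : ℕ) (hq : 1 ≤ q) (hn : 0 < 2 * n) (h : a + q ≤ 2 * n)
    (f : Equiv.Perm (Fin (2 * n))) (hf : ∀ i, f (f i) = i) :
    IsBubble n f a (a + q - 1) ↔
      (∀ i ∈ Finset.range (q - 1), f (vv n a hn i) ≠ vv n a hn (i + 1)) ∧
      (a = 0 ∨ ∃ j k : Fin (2 * n), j.val + 2 = a ∧ k.val + 1 = a ∧ f j = k) ∧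
      (a + q = 2 * n ∨ ∃ j k : Fin (2 * n), j.val = a + q ∧ k.val = a + q + 1 ∧ f j = k) := by
  unfold IsBubble
  constructor
  · rintro ⟨h1, h2, h3, h4, h5⟩
    refine ⟨?_, ?_, ?_⟩
    · intro i hi e
      rw [Finset.mem_range] at hi
      have v1 := vv_val n a hn i (by omega)
      have v2 := vv_val n a hn (i + 1) (by omega)
      refine h3 (vv n a hn i) (by omega) (by omega) (Or.inl ?_)
      rw [e]; omega
    · rcases h4 with h4 | ⟨j, hj, hs | hs⟩
      · exact Or.inl h4
      · exfalso
        refine h3 (f j) (by omega) (by omega) (Or.inr ?_)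
        rw [hf]; omega
      · refine Or.inr ⟨f j, j, by omega, hj, hf j⟩
    · rcases h5 with h5 | ⟨j, hj, hs | hs⟩
      · left; omega
      · clear h4; refine Or.inr ⟨j, f j, by omega, by omega, rfl⟩
      · exfalso
        refine h3 (f j) (by omega) (by omega) (Or.inl ?_)
        rw [hf]; omega
  · rintro ⟨h3, h4, h5⟩
    have key : ∀ j k : Fin (2 * n), f j = k → k.val = j.val + 1 → a ≤ k.val → j.val ≤ a + q - 1 →
        False := by
      intro j k hjk hk ha hj
      have hkj : f k = j := by rw [← hjk, hf]
      by_cases c1 : j.val + 1 = a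
      · rcases h4 with h4 | ⟨j', k', e1, e2, e3⟩
        · omega
        · have : j = k' := Fin.ext (by omega)
          rw [this, ← e3, hf] at hjk
          have := congrArg Fin.val hjk
          omega
      by_cases c2 : k.val = a + q
      · rcases h5 with h5 | ⟨j', k', e1, e2, e3⟩
        · have := k.isLt; omega
        · have : k = j' := Fin.ext (by omega)
          rw [this, e3] at hkj
          have := congrArg Fin.val hkj
          omega
      refine h3 (j.val - a) (by rw [Finset.mem_range]; omega) ?_
      have v1 := vv_val n a hn (j.val - a) (by omega)
      have v2 := vv_val n a hn (j.val - a + 1) (by omega)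
      rw [show vv n a hn (j.val - a) = j from Fin.ext (by omega), hjk]
      exact Fin.ext (by omega)
    refine ⟨by omega, by omega, ?_, ?_, ?_⟩
    · rintro i hi1 hi2 (hs | hs)
      · exact key i (f i) rfl hs (by omega) hi2
      · exact key (f i) i (hf i) hs.symm hi1 (by omega)
    · rcases h4 with h4 | ⟨j', k', e1, e2, e3⟩
      · exact Or.inl h4
      · refine Or.inr ⟨k', e2, Or.inr ?_⟩
        rw [← e3, hf, e3]; omega
    · rcases h5 with h5 | ⟨j', k', e1, e2, e3⟩
      · left; omega
      · refine Or.inr ⟨j', by omega, Or.inl ?_⟩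
        rw [e3]; omega

def Q (n q b a : ℕ) (f : Equiv.Perm (Fin (2 * n))) : Prop :=
  IsDiagram n f ∧ IsBubble n f a (a + q - 1) ∧ bridges n f a (a + q - 1) = b

theorem Q_iff (n a q b : ℕ) (hq : 1 ≤ q) (hn : 0 < 2 * n) (h : a + q ≤ 2 * n)
    (f : Equiv.Perm (Fin (2 * n))) : Q n q b a f ↔ f ∈ Mt Finset.univ ∧ 
      (a = 0 ∨ ∃ j k : Fin (2 * n), j.val + 2 = a ∧ k.val + 1 = a ∧ f j = k) ∧
      (a + q = 2 * n ∨ ∃ j k : Fin (2 * n), j.val = a + q ∧ k.val = a + q + 1 ∧ f j = k) ∧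
      GG (II n a q) (vv n a hn) b q f := by
  unfold Q GG
  rw [mem_Mt, bridges_br]
  constructor
  · rintro ⟨⟨h1, h2⟩, h3, h4⟩
    rw [bub_iff n a q hq hn h f h1] at h3
    exact ⟨⟨h1, by simpa using h2⟩, h3.2.1, h3.2.2, h4, h3.1⟩
  · rintro ⟨⟨h1, h2⟩, h3, h4, h5, h6⟩
    refine ⟨⟨h1, by simpa using h2⟩, ?_, h5⟩
    rw [bub_iff n a q hq hn h f h1]
    exact ⟨h6, h3, h4⟩

open Classical in
theorem Q_count (n q b a : ℕ) (hq : 1 ≤ q) (hqn : q + 4 ≤ 2 * n) :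
    ((Finset.univ.filter (Q n q b a)).card : ℝ) =
      (if a = 0 ∨ a + q = 2 * n then 1 else 0) * (wt q (2 * n - q - 2) b * rho q b) +
      (if 2 ≤ a ∧ a + q + 2 ≤ 2 * n then 1 else 0) * (wt q (2 * n - q - 4) b * rho q b) := by
  have hn : 0 < 2 * n := by omega
  rcases le_or_gt (a + q) (2 * n) with h | h
  swap
  · rw [if_neg (by omega), if_neg (by omega), Finset.filter_false_of_mem]
    · simp
    · rintro f _ ⟨_, h1, _⟩
      have := h1.2.1
      omega
  by_cases h0 : a = 0
  · rw [if_pos (by omega), if_neg (by omega)]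
    have := rem1 (II n a q) (vv n a hn) b q (card_II n a q hq hn h) (vv_mem n a q hn h)
      (vv_inj n a q hn h) ⟨a + q, by omega⟩ ⟨a + q + 1, by omega⟩ (by rw [mem_II]; simp <;> omega)
      (by rw [mem_II]; simp <;> omega) (by simp)
    rw [Fintype.card_fin] at this
    rw [one_mul, zero_mul, add_zero, ← this]
    congr 2
    ext f
    simp only [Finset.mem_filter, Finset.mem_univ, true_and, Q_iff n a q b hq hn h]
    refine and_congr_right fun _ => ?_
    constructor
    · rintro ⟨_, h2 | ⟨j, k, e1, e2, e3⟩, h3⟩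
      · omega
      · refine ⟨?_, h3⟩
        rw [show (⟨a + q, by omega⟩ : Fin (2 * n)) = j from Fin.ext e1.symm, e3]; exact Fin.ext e2
    · rintro ⟨h2, h3⟩
      exact ⟨Or.inl h0, Or.inr ⟨_, _, rfl, rfl, h2⟩, h3⟩
  by_cases h1 : a + q = 2 * n
  · rw [if_pos (by omega), if_neg (by omega)]
    have := rem1 (II n a q) (vv n a hn) b q (card_II n a q hq hn h) (vv_mem n a q hn h)
      (vv_inj n a q hn h) ⟨a - 2, by omega⟩ ⟨a - 1, by omega⟩ (by rw [mem_II]; simp <;> omega)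
      (by rw [mem_II]; simp <;> omega) (by simp <;> omega)
    rw [Fintype.card_fin] at this
    rw [one_mul, zero_mul, add_zero, ← this]
    congr 2
    ext f
    simp only [Finset.mem_filter, Finset.mem_univ, true_and, Q_iff n a q b hq hn h]
    refine and_congr_right fun _ => ?_
    constructor
    · rintro ⟨h2 | ⟨j, k, e1, e2, e3⟩, _, h3⟩
      · omega
      · refine ⟨?_, h3⟩
        rw [show (⟨a - 2, by omega⟩ : Fin (2 * n)) = j from Fin.ext (by simp <;> omega), e3]
        exact Fin.ext (by simp <;> omega)
    · rintro ⟨h2, h3⟩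
      exact ⟨Or.inr ⟨_, _, by simp <;> omega, by simp <;> omega, h2⟩, Or.inl h1, h3⟩
  rw [if_neg (by omega)]
  by_cases h2 : 2 ≤ a ∧ a + q + 2 ≤ 2 * n
  · rw [if_pos h2]
    have := rem2 (II n a q) (vv n a hn) b q (card_II n a q hq hn h) (vv_mem n a q hn h)
      (vv_inj n a q hn h) ⟨a - 2, by omega⟩ ⟨a - 1, by omega⟩ (by rw [mem_II]; simp <;> omega)
      (by rw [mem_II]; simp <;> omega) (by simp <;> omega)
      ⟨a + q, by omega⟩ ⟨a + q + 1, by omega⟩ (by rw [mem_II]; simp <;> omega)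
      (by rw [mem_II]; simp <;> omega) (by simp) (by simp <;> omega) (by simp <;> omega) (by simp <;> omega)
      (by simp <;> omega)
    rw [Fintype.card_fin] at this
    rw [one_mul, zero_mul, zero_add, ← this]
    congr 2
    ext f
    simp only [Finset.mem_filter, Finset.mem_univ, true_and, Q_iff n a q b hq hn h]
    refine and_congr_right fun _ => ?_
    constructor
    · rintro ⟨h2 | ⟨j, k, e1, e2, e3⟩, h2' | ⟨j', k', e1', e2', e3'⟩, h3⟩
      · omega
      · omega
      · omega
      · refine ⟨?_, ?_, h3⟩
        · rw [show (⟨a - 2, by omega⟩ : Fin (2 * n)) = j from Fin.ext (by simp <;> omega), e3]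
          exact Fin.ext (by simp <;> omega)
        · rw [show (⟨a + q, by omega⟩ : Fin (2 * n)) = j' from Fin.ext e1'.symm, e3']
          exact Fin.ext e2'
    · rintro ⟨h2, h2', h3⟩
      exact ⟨Or.inr ⟨_, _, by simp <;> omega, by simp <;> omega, h2⟩, Or.inr ⟨_, _, rfl, rfl, h2'⟩, h3⟩
  · rw [if_neg h2, Finset.filter_false_of_mem]
    · simp
    · intro f _
      rw [Q_iff n a q b hq hn h]
      rintro ⟨_, h3 | ⟨j, k, e1, e2, e3⟩, h3' | ⟨j', k', e1', e2', e3'⟩, _⟩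
      · omega
      · omega
      · omega
      · have := k'.isLt; omega

open Classical in
theorem N_sum (n q b : ℕ) (hq : 1 ≤ q) :
    N n q b = ∑ a ∈ Finset.range (2 * n), (Finset.univ.filter (Q n q b a)).card := by
  unfold N
  have hA : ∀ p : Equiv.Perm (Fin (2 * n)) × ℕ × ℕ,
      p ∈ (Finset.univ ×ˢ (Finset.range (2 * n) ×ˢ Finset.range (2 * n))).filter
        (fun p : Equiv.Perm (Fin (2 * n)) × ℕ × ℕ => 
          IsDiagram n p.1 ∧ IsBubble n p.1 p.2.1 p.2.2 ∧
          bubbleSize p.2.1 p.2.2 = q ∧ bridges n p.1 p.2.1 p.2.2 = b) ↔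
      (IsDiagram n p.1 ∧ IsBubble n p.1 p.2.1 p.2.2 ∧
          bubbleSize p.2.1 p.2.2 = q ∧ bridges n p.1 p.2.1 p.2.2 = b) := by
    intro p
    simp only [Finset.mem_filter, Finset.mem_product, Finset.mem_univ, Finset.mem_range, true_and,
      and_iff_right_iff_imp]
    rintro ⟨_, h, _⟩
    have := h.1
    have := h.2.1
    omega
  rw [Nat.subtype_card _ hA, Finset.card_eq_sum_card_fiberwise (f := fun p => p.2.1)
    (t := Finset.range (2 * n))]
  · refine Finset.sum_congr rfl fun a ha => ?_
    refine Finset.card_bij' (fun p _ => p.1) (fun f _ => (f, a, a + q - 1)) ?_ ?_ ?_ ?_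
    · rintro ⟨f, a', c⟩ hp
      rw [Finset.mem_filter, hA] at hp
      obtain ⟨⟨h1, h2, h3, h4⟩, h5⟩ := hp
      simp only at h1 h2 h3 h4 h5
      have : c = a + q - 1 := by unfold bubbleSize at h3; have := h2.1; omega
      subst h5 this
      simpa using ⟨h1, h2, h4⟩
    · intro f hf
      simp only [Finset.mem_filter, Finset.mem_univ, true_and] at hf
      rw [Finset.mem_filter, hA]
      exact ⟨⟨hf.1, hf.2.1, by unfold bubbleSize; simp only; omega, hf.2.2⟩, rfl⟩
    · rintro ⟨f, a', c⟩ hp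
      rw [Finset.mem_filter, hA] at hp
      obtain ⟨⟨h1, h2, h3, h4⟩, h5⟩ := hp
      simp only at h1 h2 h3 h4 h5
      have : c = a + q - 1 := by unfold bubbleSize at h3; have := h2.1; omega
      subst h5 this
      rfl
    · intro f _; rfl
  · intro p hp
    have := (Finset.mem_filter.1 hp).1
    simp only [Finset.mem_product] at this
    exact this.2.1

noncomputable def al (q n : ℕ) : ℝ :=
  ∑ a ∈ Finset.range (2 * n), if a = 0 ∨ a + q = 2 * n then 1 else 0

noncomputable def be (q n : ℕ) : ℝ :=
  ∑ a ∈ Finset.range (2 * n), if 2 ≤ a ∧ a + q + 2 ≤ 2 * n then 1 else 0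

theorem N_eq_s2 (n q b : ℕ) (hq : 1 ≤ q) (hqn : q + 4 ≤ 2 * n) :
    (N n q b : ℝ) = al q n * (wt q (2 * n - q - 2) b * rho q b) +
      be q n * (wt q (2 * n - q - 4) b * rho q b) := by
  classical
  rw [N_sum n q b hq]
  push_cast
  rw [Finset.sum_congr rfl fun a _ => Q_count n q b a hq hqn, Finset.sum_add_distrib,
    ← Finset.sum_mul, ← Finset.sum_mul]
  rfl

theorem al_pos (q n : ℕ) (hn : 0 < n) : 0 < al q n := by
  unfold al
  refine Finset.sum_pos' (fun a _ => by positivity) ⟨0, by simpa using hn, by simp⟩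

theorem be_nonneg (q n : ℕ) : 0 ≤ be q n := by
  unfold be
  exact Finset.sum_nonneg fun a _ => by positivity

theorem final (c : ℝ) (hc0 : 0 < c) (hc2 : c < 2) (q : ℕ → ℕ)
    (hq : Filter.Tendsto (fun n => (q n : ℝ) / n) Filter.atTop (nhds c)) (t : ℝ) :
    Filter.Tendsto
      (fun n =>
        (∑ b ∈ Finset.range (2 * n + 1),
          if (b : ℝ) ≤ TH t q n then (N n (q n) b : ℝ) else 0) /
        (∑ b ∈ Finset.range (2 * n + 1), (N n (q n) b : ℝ)))
      Filter.atTop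
      (nhds ((Real.sqrt (2 * Real.pi))⁻¹ * ∫ x in Set.Iic t, Real.exp (-x ^ 2 / 2))) := by
  obtain ⟨p1, h1⟩ := main_an c hc0 hc2 q hq 2 (by decide) t
  obtain ⟨p2, h2⟩ := main_an c hc0 hc2 q hq 4 (by decide) t
  have hα : ∀ᶠ n in atTop, 0 < al (q n) n := by
    filter_upwards [eventually_gt_atTop 0] with n hn using al_pos _ _ hn
  refine (mix _ _ _ _ (fun n => al (q n) n) (fun n => be (q n) n) _ h1 h2 p1 p2 hα
    (fun n => be_nonneg _ _)).congr' ?_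
  filter_upwards [ev_facts c hc0 hc2 q hq 4] with n hn
  have e := fun b => N_eq_s2 n (q n) b hn.2.1 hn.1
  simp only [e, Finset.mul_sum, ← Finset.sum_add_distrib]
  congr 1
  refine Finset.sum_congr rfl fun b _ => ?_
  split_ifs <;> simp


end helpers

/-- Asymptotic normality of the number of bridges: for bubbles of size `q n ~ c·n` with
`0 < c < 2`, the proportion of (diagram, bubble) pairs with at most `b̄ + t·σ` bridges, where
`b̄ = q(2n-q)/(2n)` and `σ = q(2n-q)/(2n^{3/2})`, tends to the standard normal CDF `Φ(t)`. -/
theorem bridges_asymptotically_normal (c : ℝ) (hc0 : 0 < c) (hc2 : c < 2) (q : ℕ → ℕ)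
    (hq : Filter.Tendsto (fun n => (q n : ℝ) / n) Filter.atTop (nhds c)) (t : ℝ) :
    Filter.Tendsto
      (fun n =>
        (∑ b ∈ Finset.range (2 * n + 1),
          if (b : ℝ) ≤ (q n : ℝ) * (2 * (n : ℝ) - (q n : ℝ)) / (2 * (n : ℝ))
              + t * ((q n : ℝ) * (2 * (n : ℝ) - (q n : ℝ)) / (2 * (n : ℝ) ^ ((3 : ℝ) / 2)))
            then (N n (q n) b : ℝ) else 0) /
        (∑ b ∈ Finset.range (2 * n + 1), (N n (q n) b : ℝ)))
      Filter.atTop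
      (nhds ((Real.sqrt (2 * Real.pi))⁻¹ * ∫ x in Set.Iic t, Real.exp (-x ^ 2 / 2))) := by
  exact final c hc0 hc2 q hq t

end ChordBubbles
end
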